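/- Let d ≥ 2, 0 < s ≤ 1, 1 < γ < ∞, 1 ≤ p, q < ∞, 1 < α < d, and 0 < β₁, β₂ < ∞ be such that β₁p + 2β₂q = 1 and (d − sp)β₁ + (d + α)β₂ = d/γ, and 𝒟 = p(d+α) − 2q(d−sp) ≠ 0. Assume that either β₁γ + ((d+α−2)/(d−1)) β₂γ < 1, or (β₁γ + ((d+α−2)/(d−1)) β₂γ = 1 and q(1−sp) ≠ p). Then there is NO constant C > 0 such that ‖g‖_{L^γ(ℝ^d)} ≤ C ‖g‖_{Ẇ^{s,p}(ℝ^d)}^{β₁p} ( ∫_{ℝ^d}∫_{ℝ^d} |g(x)|^q |g(y)|^q / |x−y|^{d−α} dx dy )^{β₂} holds for all radial g ∈ C¹_{c,rad}(ℝ^d). -/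

import Mathlib

/-
The inequality is tested on bump functions of height `A` carried by the spherical shell of radius
`R` and thickness `ε R`. Up to constants, `∫ |g|^γ` is at least `A^γ R^d ε`, while the `p`-th power
of the Sobolev seminorm is at most `A^p R^(d - s p) ε^(1 - s p)` and, since `α > 1` makes the kernel
integrable along the shell, the mutual Coulomb energy of two such bumps is at most
`(A^q R^d ε) (A'^q R'^d ε') max(R, R')^(α - d)`.

The scaling relations turn the strict hypothesis into `1 / γ < (1 - s p) β₁ + 2 β₂`, so a single
shell with `A = R = 1` and `ε → 0` violates the inequality. In the case of equality there is a
one-parameter family of shells along which the first two expressions, and the third with both bumps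
equal, are `1`. Its radius and its width both vary because `q (1 - s p) ≠ p` and
`p (d + α) ≠ 2 q (d - s p)`, hence `N` thin shells of the family can be taken so far apart that they
barely interact. The inequality for their sum would give `N^(1 / γ) ≲ N^(β₁ + β₂)`, whereas
`β₁ + β₂ < 1 / γ` because `α > 1`.
-/

open MeasureTheory Real

/-- Homogeneous (fractional) Sobolev seminorm `‖g‖_{Ẇ^{s,p}(ℝ^d)}`:
for `0 < s < 1` the Gagliardo seminorm, for `s = 1` the `L^p` norm of the gradient. -/
noncomputable def sobolevSemi (d : ℕ) (s p : ℝ) (g : EuclideanSpace ℝ (Fin d) → ℝ) : ℝ :=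
  if s = 1 then (∫ x, ‖fderiv ℝ g x‖ ^ p) ^ (1 / p)
  else if s = 0 then (∫ x, |g x| ^ p) ^ (1 / p)
  else (∫ x, ∫ y, |g x - g y| ^ p / ‖x - y‖ ^ ((d : ℝ) + s * p)) ^ (1 / p)

/-- The Coulomb energy `∫∫ |g x|^q |g y|^q / |x-y|^{d-α} dx dy`. -/
noncomputable def coulombEnergy (d : ℕ) (q α : ℝ) (g : EuclideanSpace ℝ (Fin d) → ℝ) : ℝ :=
  ∫ x, ∫ y, |g x| ^ q * |g y| ^ q / ‖x - y‖ ^ ((d : ℝ) - α)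

open Function (support)
open scoped ContDiff ENNReal Function NNReal

section DisjointSupports

variable {ι X M N : Type*} [Fintype ι]

lemma map_sum_of_pairwise_disjoint_support [AddCommMonoid M] [AddCommMonoid N] {f : ι → X → M}
    (hf : Pairwise (Disjoint on fun i => support (f i))) {φ : M → N} (hφ : φ 0 = 0) (x : X) :
    φ (∑ i, f i x) = ∑ i, φ (f i x) := by
  by_cases hx : ∃ i, f i x ≠ 0
  · obtain ⟨i, hi⟩ := hx
    have hzero : ∀ j, j ≠ i → f j x = 0 := fun j hj => by
      by_contra hj'
      exact (hf hj).le_bot ⟨hj', hi⟩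
    rw [Fintype.sum_eq_single i hzero, Fintype.sum_eq_single i fun j hj => by rw [hzero j hj, hφ]]
  · push Not at hx
    simp only [hx, hφ, Finset.sum_const_zero]

variable [NormedAddCommGroup M] {p : ℝ}

lemma enorm_sum_rpow_le_card_rpow_mul_sum {ι : Type*} (T : Finset ι) (a : ι → M) (hp : 0 < p) :
    ‖∑ i ∈ T, a i‖ₑ ^ p ≤ (T.card : ℝ≥0∞) ^ p * ∑ i ∈ T, ‖a i‖ₑ ^ p := by
  rcases T.eq_empty_or_nonempty with rfl | hT
  · simp only [Finset.sum_empty, enorm_zero, ENNReal.zero_rpow_of_pos hp, zero_le]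
  obtain ⟨m, hm, hmax⟩ := T.exists_max_image (fun i => ‖a i‖ₑ) hT
  calc ‖∑ i ∈ T, a i‖ₑ ^ p ≤ (∑ i ∈ T, ‖a i‖ₑ) ^ p := by gcongr; exact enorm_sum_le _ _
    _ ≤ (T.card * ‖a m‖ₑ) ^ p := by
      gcongr; exact (Finset.sum_le_card_nsmul T _ _ hmax).trans_eq (nsmul_eq_mul _ _)
    _ = (T.card : ℝ≥0∞) ^ p * ‖a m‖ₑ ^ p := ENNReal.mul_rpow_of_nonneg _ _ hp.le
    _ ≤ (T.card : ℝ≥0∞) ^ p * ∑ i ∈ T, ‖a i‖ₑ ^ p := by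
      gcongr; exact Finset.single_le_sum (f := fun i => ‖a i‖ₑ ^ p) (fun _ _ => zero_le) hm

lemma enorm_sum_sub_sum_rpow_le {f : ι → X → M}
    (hf : Pairwise (Disjoint on fun i => support (f i))) (hp : 0 < p) (x y : X) :
    ‖∑ i, f i x - ∑ i, f i y‖ₑ ^ p ≤ 2 ^ p * ∑ i, ‖f i x - f i y‖ₑ ^ p := by
  classical
  have hcard : ∀ z, ({i | f i z ≠ 0} : Finset ι).card ≤ 1 := fun z =>
    Finset.card_le_one.2 fun i hi j hj => by
      by_contra hij
      exact (hf hij).le_bot ⟨(Finset.mem_filter.1 hi).2, (Finset.mem_filter.1 hj).2⟩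
  set T : Finset ι := ({i | f i x ≠ 0} : Finset ι) ∪ ({i | f i y ≠ 0} : Finset ι)
  have hT : ∑ i, f i x - ∑ i, f i y = ∑ i ∈ T, (f i x - f i y) := by
    rw [← Finset.sum_sub_distrib]
    refine (Finset.sum_subset T.subset_univ fun i _ hi => ?_).symm
    simp only [T, Finset.mem_union, Finset.mem_filter, Finset.mem_univ, true_and, not_or,
      not_not] at hi
    rw [hi.1, hi.2, sub_zero]
  have hT2 : (T.card : ℝ≥0∞) ≤ 2 := by
    exact_mod_cast (Finset.card_union_le _ _).trans (add_le_add (hcard x) (hcard y))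
  rw [hT]
  calc ‖∑ i ∈ T, (f i x - f i y)‖ₑ ^ p
      ≤ (T.card : ℝ≥0∞) ^ p * ∑ i ∈ T, ‖f i x - f i y‖ₑ ^ p :=
        enorm_sum_rpow_le_card_rpow_mul_sum T _ hp
    _ ≤ 2 ^ p * ∑ i, ‖f i x - f i y‖ₑ ^ p := by
      gcongr; exact Finset.subset_univ T

end DisjointSupports

section RadialKernels

variable {E : Type*} [NormedAddCommGroup E]

lemma enorm_div_norm_rpow {z : E} (hz : z ≠ 0) {e : ℝ} (he : 0 ≤ e) (a : ℝ) :
    ‖a / ‖z‖ ^ e‖ₑ = ‖a‖ₑ / ‖z‖ₑ ^ e := by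
  have hne : ‖z‖ ^ e ≠ 0 := (Real.rpow_pos_of_pos (norm_pos_iff.2 hz) e).ne'
  rw [div_eq_mul_inv, enorm_mul, enorm_inv hne, Real.enorm_rpow_of_nonneg (norm_nonneg z) he,
    enorm_norm, ← div_eq_mul_inv]

lemma enorm_div_norm_rpow_le (z : E) {e : ℝ} (he : 0 ≤ e) (a : ℝ) :
    ‖a / ‖z‖ ^ e‖ₑ ≤ ‖a‖ₑ / ‖z‖ₑ ^ e := by
  rcases eq_or_ne z 0 with rfl | hz
  · rcases he.eq_or_lt with rfl | he
    · simp
    · simp [he.ne']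
  · exact (enorm_div_norm_rpow hz he a).le

lemma inv_enorm_smul_rpow [NormedSpace ℝ E] {c : ℝ} (hc : 0 < c) (z : E) {e : ℝ} (he : 0 ≤ e) :
    (‖c • z‖ₑ ^ e)⁻¹ = ENNReal.ofReal (c ^ (-e)) * (‖z‖ₑ ^ e)⁻¹ := by
  rw [enorm_smul, Real.enorm_of_nonneg hc.le, ENNReal.mul_rpow_of_nonneg _ _ he,
    ENNReal.ofReal_rpow_of_pos hc,
    ENNReal.mul_inv (Or.inl (ENNReal.ofReal_pos.2 (by positivity)).ne')
      (Or.inl ENNReal.ofReal_ne_top),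
    Real.rpow_neg hc.le, ENNReal.ofReal_inv_of_pos (by positivity)]

variable [NormedSpace ℝ E] [FiniteDimensional ℝ E]
  [MeasurableSpace E] [BorelSpace E] (μ : Measure E) [μ.IsAddHaarMeasure]

lemma lintegral_eq_mul_lintegral_comp_smul {c : ℝ} (hc : 0 < c) (f : E → ℝ≥0∞) :
    ∫⁻ x, f x ∂μ = ENNReal.ofReal (c ^ Module.finrank ℝ E) * ∫⁻ x, f (c • x) ∂μ := by
  have hmap := lintegral_map_equiv (μ := μ) f (MeasurableEquiv.smul₀ c hc.ne')
  simp only [MeasurableEquiv.coe_smul₀] at hmap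
  rw [← hmap, Measure.map_addHaar_smul μ hc.ne', lintegral_smul_measure, abs_of_pos (by positivity),
    smul_eq_mul, ← mul_assoc, ← ENNReal.ofReal_mul (by positivity),
    mul_inv_cancel₀ (by positivity), ENNReal.ofReal_one, one_mul]

variable [Nontrivial E]

lemma setLIntegral_unitBall_inv_enorm_rpow_lt_top {a : ℝ} (ha0 : 0 ≤ a)
    (ha : a < Module.finrank ℝ E) : ∫⁻ z in Metric.ball (0 : E) 1, (‖z‖ₑ ^ a)⁻¹ ∂μ < ⊤ := by
  have hint : IntegrableOn (fun z : E => 1 / ‖z‖ ^ a) (Metric.ball (0 : E) 1) μ := by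
    rw [integrableOn_fun_norm_addHaar μ (f := fun t : ℝ => 1 / t ^ a)]
    have hpow := (intervalIntegral.integrableOn_Ioo_rpow_iff
      (s := (Module.finrank ℝ E : ℝ) - 1 - a) one_pos).2 (by linarith)
    refine hpow.congr_fun (fun t ht => ?_) measurableSet_Ioo
    simp only [smul_eq_mul]
    rw [mul_one_div, ← Real.rpow_natCast, ← Real.rpow_sub ht.1, Nat.cast_pred Module.finrank_pos]
  refine (lintegral_mono_ae ?_).trans_lt hint.2
  filter_upwards [ae_restrict_of_ae (Measure.ae_ne μ 0)] with z hz
  rw [enorm_div_norm_rpow hz ha0, enorm_one, one_div]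

lemma exists_setLIntegral_ball_inv_enorm_rpow_le {a : ℝ} (ha0 : 0 ≤ a)
    (ha : a < Module.finrank ℝ E) :
    ∃ C : ℝ≥0, ∀ r > 0, ∫⁻ z in Metric.ball (0 : E) r, (‖z‖ₑ ^ a)⁻¹ ∂μ ≤
      C * ENNReal.ofReal (r ^ (Module.finrank ℝ E - a)) := by
  lift ∫⁻ z in Metric.ball (0 : E) 1, (‖z‖ₑ ^ a)⁻¹ ∂μ to ℝ≥0
    using (setLIntegral_unitBall_inv_enorm_rpow_lt_top μ ha0 ha).ne with C hC
  refine ⟨C, fun r hr => le_of_eq ?_⟩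
  have hscale : ∀ z : E, (Metric.ball (0 : E) r).indicator (fun z => (‖z‖ₑ ^ a)⁻¹) (r • z) =
      ENNReal.ofReal (r ^ (-a)) * (Metric.ball (0 : E) 1).indicator (fun z => (‖z‖ₑ ^ a)⁻¹) z := by
    intro z
    have hmem : r • z ∈ Metric.ball (0 : E) r ↔ z ∈ Metric.ball (0 : E) 1 := by
      simp [norm_smul, abs_of_pos hr, mul_lt_iff_lt_one_right hr]
    by_cases hz : z ∈ Metric.ball (0 : E) 1
    · rw [Set.indicator_of_mem (hmem.2 hz), Set.indicator_of_mem hz, inv_enorm_smul_rpow hr z ha0]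
    · rw [Set.indicator_of_notMem (hmem.not.2 hz), Set.indicator_of_notMem hz, mul_zero]
  rw [← lintegral_indicator Metric.isOpen_ball.measurableSet,
    lintegral_eq_mul_lintegral_comp_smul μ hr, lintegral_congr hscale,
    lintegral_const_mul' _ _ ENNReal.ofReal_ne_top,
    lintegral_indicator Metric.isOpen_ball.measurableSet, ← hC, ← mul_assoc,
    ← ENNReal.ofReal_mul (by positivity), ← Real.rpow_natCast, ← Real.rpow_add hr, mul_comm,
    sub_eq_add_neg]

variable {s p : ℝ}

lemma lintegral_min_one_norm_rpow_div_lt_top (hs0 : 0 < s) (hs1 : s < 1) (hp : 0 < p) :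
    ∫⁻ z : E, ENNReal.ofReal (min 1 ‖z‖) ^ p / ‖z‖ₑ ^ (Module.finrank ℝ E + s * p) ∂μ < ⊤ := by
  set n := Module.finrank ℝ E with hn
  have hn0 : 0 < n := Module.finrank_pos
  have hint : Integrable (fun z : E => min 1 ‖z‖ ^ p / ‖z‖ ^ (n + s * p)) μ := by
    rw [integrable_fun_norm_addHaar μ (f := fun t : ℝ => min 1 t ^ p / t ^ (n + s * p)), ← hn,
      ← Set.Ioo_union_Ici_eq_Ioi one_pos]
    have hpow : ∀ t : ℝ, 0 < t → t ^ (n - 1) = t ^ ((n : ℝ) - 1) := fun t _ => by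
      rw [← Real.rpow_natCast, Nat.cast_pred hn0]
    refine IntegrableOn.union ?_ ?_
    · have hnear := (intervalIntegral.integrableOn_Ioo_rpow_iff (s := p * (1 - s) - 1) one_pos).2
        (by nlinarith)
      refine hnear.congr_fun (fun t ht => ?_) measurableSet_Ioo
      simp only [smul_eq_mul]
      rw [min_eq_right ht.2.le, hpow t ht.1, ← Real.rpow_sub ht.1, ← Real.rpow_add ht.1]
      congr 1
      ring
    · rw [integrableOn_Ici_iff_integrableOn_Ioi]
      have hfar := integrableOn_Ioi_rpow_of_lt (a := -1 - s * p) (by nlinarith [mul_pos hs0 hp])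
        one_pos
      refine hfar.congr_fun (fun t ht => ?_) measurableSet_Ioi
      have ht0 : (0 : ℝ) < t := one_pos.trans ht
      simp only [smul_eq_mul]
      rw [min_eq_left (le_of_lt ht), hpow t ht0, Real.one_rpow, one_div, ← Real.rpow_neg ht0.le,
        ← Real.rpow_add ht0]
      congr 1
      ring
  refine (lintegral_mono_ae ?_).trans_lt hint.2
  filter_upwards [Measure.ae_ne μ 0] with z hz
  have hmin : 0 ≤ min 1 ‖z‖ := le_min zero_le_one (norm_nonneg z)
  rw [enorm_div_norm_rpow hz (by positivity), Real.enorm_rpow_of_nonneg hmin hp.le,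
    Real.enorm_of_nonneg hmin]

lemma exists_lintegral_min_one_mul_norm_rpow_div_le (hs0 : 0 < s) (hs1 : s < 1) (hp : 0 < p) :
    ∃ C : ℝ≥0, ∀ c > 0,
      ∫⁻ z : E, ENNReal.ofReal (min 1 (c * ‖z‖)) ^ p / ‖z‖ₑ ^ (Module.finrank ℝ E + s * p) ∂μ ≤
        C * ENNReal.ofReal (c ^ (s * p)) := by
  lift ∫⁻ z : E, ENNReal.ofReal (min 1 ‖z‖) ^ p / ‖z‖ₑ ^ (Module.finrank ℝ E + s * p) ∂μ to ℝ≥0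
    using (lintegral_min_one_norm_rpow_div_lt_top μ hs0 hs1 hp).ne with C hC
  refine ⟨C, fun c hc => le_of_eq ?_⟩
  set e : ℝ := Module.finrank ℝ E + s * p
  have he : 0 ≤ e := by positivity
  have hscale : ∀ z : E, ENNReal.ofReal (min 1 ‖c • z‖) ^ p / ‖c • z‖ₑ ^ e =
      ENNReal.ofReal (c ^ (-e)) * (ENNReal.ofReal (min 1 (c * ‖z‖)) ^ p / ‖z‖ₑ ^ e) := by
    intro z
    rw [norm_smul, Real.norm_of_nonneg hc.le, div_eq_mul_inv, inv_enorm_smul_rpow hc z he,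
      mul_left_comm, ← div_eq_mul_inv]
  have hone : c ^ Module.finrank ℝ E * c ^ (-e) * c ^ (s * p) = 1 := by
    rw [← Real.rpow_natCast, ← Real.rpow_add hc, ← Real.rpow_add hc, ← Real.rpow_zero c]
    congr 1
    ring
  rw [hC, lintegral_eq_mul_lintegral_comp_smul μ hc
      (fun z : E => ENNReal.ofReal (min 1 ‖z‖) ^ p / ‖z‖ₑ ^ e), lintegral_congr hscale,
    lintegral_const_mul' _ _ ENNReal.ofReal_ne_top, ← mul_assoc, mul_right_comm,
    ← ENNReal.ofReal_mul (by positivity), ← ENNReal.ofReal_mul (by positivity), hone,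
    ENNReal.ofReal_one, one_mul]

end RadialKernels

section Energies

lemma lintegral_lintegral_finsetSum {ι X : Type*} [MeasurableSpace X] {μ : Measure X}
    [SFinite μ] (T : Finset ι) {F : ι → X → X → ℝ≥0∞}
    (hF : ∀ i, Measurable (Function.uncurry (F i))) :
    ∫⁻ x, ∫⁻ y, ∑ i ∈ T, F i x y ∂μ ∂μ = ∑ i ∈ T, ∫⁻ x, ∫⁻ y, F i x y ∂μ ∂μ := by
  rw [← lintegral_finsetSum T (f := fun i x => ∫⁻ y, F i x y ∂μ) fun i _ =>
    (hF i).lintegral_prod_right']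
  exact lintegral_congr fun x =>
    lintegral_finsetSum T fun i _ => (hF i).comp measurable_prodMk_left

variable {E : Type*} [NormedAddCommGroup E] [MeasurableSpace E]

/-- The mutual Riesz energy `∬ u x * v y / |x - y| ^ e` of two densities. -/
noncomputable def rieszEnergy (μ : Measure E) (e : ℝ) (u v : E → ℝ≥0∞) : ℝ≥0∞ :=
  ∫⁻ x, ∫⁻ y, u x * v y / ‖x - y‖ₑ ^ e ∂μ ∂μ

/-- The `p`-th power of the `Ẇ^{s,p}` seminorm, as an extended nonnegative number: the Gagliardo
energy, or the Dirichlet `p`-energy when `s = 1`. -/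
noncomputable def sobolevEnergy [NormedSpace ℝ E] (μ : Measure E) (s p : ℝ) (g : E → ℝ) : ℝ≥0∞ :=
  if s = 1 then ∫⁻ x, ‖fderiv ℝ g x‖ₑ ^ p ∂μ
  else ∫⁻ x, ∫⁻ y, ‖g x - g y‖ₑ ^ p / ‖x - y‖ₑ ^ (Module.finrank ℝ E + s * p) ∂μ ∂μ

variable [BorelSpace E] {μ : Measure E} {p : ℝ}

lemma lintegral_enorm_fderiv_sum_rpow [NormedSpace ℝ E] {ι : Type*} [Fintype ι]
    {f : ι → E → ℝ} (hdiff : ∀ i, Differentiable ℝ (f i))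
    (hf : Pairwise (Disjoint on fun i => tsupport (f i))) (hp : 0 < p) :
    ∫⁻ x, ‖fderiv ℝ (fun x => ∑ i, f i x) x‖ₑ ^ p ∂μ =
      ∑ i, ∫⁻ x, ‖fderiv ℝ (f i) x‖ₑ ^ p ∂μ := by
  have hsupp : Pairwise (Disjoint on fun i => support (fderiv ℝ (f i))) := fun i j hij =>
    (hf hij).mono (support_fderiv_subset ℝ) (support_fderiv_subset ℝ)
  rw [← lintegral_finsetSum _ fun i _ => by fun_prop]
  refine lintegral_congr fun x => ?_
  rw [fderiv_fun_sum fun i _ => (hdiff i).differentiableAt]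
  exact map_sum_of_pairwise_disjoint_support hsupp (φ := fun L => ‖L‖ₑ ^ p)
    (by simp [enorm, hp]) x

variable [SecondCountableTopology E]

lemma rieszEnergy_le_of_le_indicator {e : ℝ} {u v : E → ℝ≥0∞} {S T : Set E}
    {a b V : ℝ≥0∞} (hS : MeasurableSet S) (hT : MeasurableSet T)
    (hu : u ≤ S.indicator fun _ => a) (hv : v ≤ T.indicator fun _ => b)
    (hV : ∀ x ∈ S, ∫⁻ y in T, (‖x - y‖ₑ ^ e)⁻¹ ∂μ ≤ V) :
    rieszEnergy μ e u v ≤ a * μ S * (b * V) := by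
  calc rieszEnergy μ e u v
      ≤ ∫⁻ x, S.indicator (fun _ => a * (b * V)) x ∂μ := by
        refine lintegral_mono fun x => ?_
        by_cases hx : x ∈ S
        swap
        · have hux : u x = 0 := by simpa [hx] using hu x
          simp [hux]
        have hux : u x ≤ a := by simpa [hx] using hu x
        rw [Set.indicator_of_mem hx]
        calc ∫⁻ y, u x * v y / ‖x - y‖ₑ ^ e ∂μ
            ≤ ∫⁻ y, T.indicator (fun y => a * b * (‖x - y‖ₑ ^ e)⁻¹) y ∂μ := by
              refine lintegral_mono fun y => ?_
              by_cases hy : y ∈ T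
              · have hvy : v y ≤ b := by simpa [hy] using hv y
                rw [Set.indicator_of_mem hy, div_eq_mul_inv]
                gcongr
              · have hvy : v y = 0 := by simpa [hy] using hv y
                simp [hvy]
          _ ≤ a * (b * V) := by
            rw [lintegral_indicator hT, lintegral_const_mul _ (by fun_prop), mul_assoc]
            gcongr
            exact hV x hx
    _ = a * μ S * (b * V) := by
      rw [lintegral_indicator_const hS, mul_right_comm]

variable [SFinite μ]

lemma rieszEnergy_comm (e : ℝ) {u v : E → ℝ≥0∞} (hu : Measurable u) (hv : Measurable v) :
    rieszEnergy μ e u v = rieszEnergy μ e v u := by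
  rw [rieszEnergy, lintegral_lintegral_swap (by fun_prop)]
  simp only [rieszEnergy, mul_comm, enorm_sub_rev]

lemma rieszEnergy_sum {ι : Type*} [Fintype ι] (e : ℝ) {u : ι → E → ℝ≥0∞}
    (hu : ∀ i, Measurable (u i)) :
    rieszEnergy μ e (fun x => ∑ i, u i x) (fun x => ∑ i, u i x) =
      ∑ i, ∑ j, rieszEnergy μ e (u i) (u j) := by
  have hF : ∀ k : ι × ι, Measurable (Function.uncurry fun x y : E =>
      u k.1 x * u k.2 y / ‖x - y‖ₑ ^ e) := fun k => by
    have := hu k.1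
    have := hu k.2
    fun_prop
  rw [← Fintype.sum_prod_type' fun i j => rieszEnergy μ e (u i) (u j)]
  simp only [rieszEnergy]
  rw [← lintegral_lintegral_finsetSum _ hF]
  refine lintegral_congr fun x => lintegral_congr fun y => ?_
  rw [Finset.sum_mul_sum, ← Fintype.sum_prod_type' fun i j => u i x * u j y]
  simp only [div_eq_mul_inv, Finset.sum_mul]

lemma lintegral_lintegral_enorm_sub_rpow_div_le [μ.IsAddLeftInvariant] [μ.IsNegInvariant]
    {S : Set E} (hS : MeasurableSet S) {g : E → ℝ} (hg : support g ⊆ S) {w : E → ℝ≥0∞}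
    (hw : Measurable w) (hgw : ∀ x y, ‖g x - g y‖ₑ ≤ w (x - y)) (hp : 0 < p) (e : ℝ) :
    ∫⁻ x, ∫⁻ y, ‖g x - g y‖ₑ ^ p / ‖x - y‖ₑ ^ e ∂μ ∂μ ≤
      2 * μ S * ∫⁻ z, w z ^ p / ‖z‖ₑ ^ e ∂μ := by
  set K : E → ℝ≥0∞ := fun z => w z ^ p / ‖z‖ₑ ^ e
  have hK : Measurable K := by fun_prop
  set χ : E → ℝ≥0∞ := S.indicator 1
  have hχ : Measurable χ := measurable_one.indicator hS
  have hχint : ∫⁻ x, χ x ∂μ = μ S := lintegral_indicator_one hS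
  have hpt : ∀ x y, ‖g x - g y‖ₑ ^ p / ‖x - y‖ₑ ^ e ≤ χ x * K (x - y) + χ y * K (x - y) := by
    intro x y
    by_cases hxy : g x = 0 ∧ g y = 0
    · simp [hxy, hp]
    have hone : 1 ≤ χ x + χ y := by
      rcases not_and_or.1 hxy with hx | hy
      · simp [χ, Set.indicator_of_mem (hg hx)]
      · simp [χ, Set.indicator_of_mem (hg hy)]
    rw [← add_mul]
    refine le_trans ?_ (le_mul_of_one_le_left zero_le hone)
    simp only [K]
    gcongr
    exact hgw x y
  calc ∫⁻ x, ∫⁻ y, ‖g x - g y‖ₑ ^ p / ‖x - y‖ₑ ^ e ∂μ ∂μ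
      ≤ ∫⁻ x, ∫⁻ y, (χ x * K (x - y) + χ y * K (x - y)) ∂μ ∂μ :=
        lintegral_mono fun x => lintegral_mono fun y => hpt x y
    _ = ∫⁻ x, ∫⁻ y, χ x * K (x - y) ∂μ ∂μ + ∫⁻ y, ∫⁻ x, χ y * K (x - y) ∂μ ∂μ := by
      rw [lintegral_lintegral_swap (f := fun y x => χ y * K (x - y)) (by fun_prop),
        ← lintegral_add_left (by fun_prop)]
      exact lintegral_congr fun x => lintegral_add_left (by fun_prop) _
    _ = 2 * μ S * ∫⁻ z, K z ∂μ := by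
      have hleft : ∀ x, ∫⁻ y, χ x * K (x - y) ∂μ = χ x * ∫⁻ z, K z ∂μ := fun x => by
        rw [lintegral_const_mul _ (by fun_prop), lintegral_sub_left_eq_self]
      have hright : ∀ y, ∫⁻ x, χ y * K (x - y) ∂μ = χ y * ∫⁻ z, K z ∂μ := fun y => by
        rw [lintegral_const_mul _ (by fun_prop), lintegral_sub_right_eq_self]
      simp only [hleft, hright, lintegral_mul_const _ hχ, hχint]
      ring

lemma sobolevEnergy_sum_le [NormedSpace ℝ E] {ι : Type*} [Fintype ι] {f : ι → E → ℝ} {s : ℝ}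
    (hdiff : ∀ i, Differentiable ℝ (f i))
    (hf : Pairwise (Disjoint on fun i => tsupport (f i))) (hp : 0 < p) :
    sobolevEnergy μ s p (fun x => ∑ i, f i x) ≤ 2 ^ p * ∑ i, sobolevEnergy μ s p (f i) := by
  unfold sobolevEnergy
  split_ifs with hs
  · rw [lintegral_enorm_fderiv_sum_rpow hdiff hf hp]
    exact le_mul_of_one_le_left zero_le (ENNReal.one_le_rpow one_le_two hp)
  have hsupp : Pairwise (Disjoint on fun i => support (f i)) := fun i j hij =>
    (hf hij).mono (subset_tsupport _) (subset_tsupport _)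
  set e : ℝ := Module.finrank ℝ E + s * p
  have hF : ∀ i, Measurable (Function.uncurry fun x y : E =>
      ‖f i x - f i y‖ₑ ^ p / ‖x - y‖ₑ ^ e) := fun i => by
    have := (hdiff i).continuous.measurable
    fun_prop
  rw [← lintegral_lintegral_finsetSum _ hF, ← lintegral_const_mul' _ _ (by finiteness)]
  refine lintegral_mono fun x => ?_
  rw [← lintegral_const_mul' _ _ (by finiteness)]
  refine lintegral_mono fun y => ?_
  simp only [div_eq_mul_inv, ← Finset.sum_mul, ← mul_assoc]
  gcongr
  exact enorm_sum_sub_sum_rpow_le hsupp hp x y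

end Energies

section Comparison

variable {d : ℕ} {s p q α : ℝ} {g : EuclideanSpace ℝ (Fin d) → ℝ}

lemma ofReal_coulombEnergy_le (hq : 0 ≤ q) (hα : α ≤ d) :
    ENNReal.ofReal (coulombEnergy d q α g) ≤
      rieszEnergy volume (d - α) (fun x => ‖g x‖ₑ ^ q) fun x => ‖g x‖ₑ ^ q := by
  refine (Real.ofReal_le_enorm _).trans <| (enorm_integral_le_lintegral_enorm _).trans <|
    lintegral_mono fun x => (enorm_integral_le_lintegral_enorm _).trans <|
    lintegral_mono fun y => ?_
  refine (enorm_div_norm_rpow_le _ (sub_nonneg.2 hα) _).trans_eq ?_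
  rw [enorm_mul, Real.enorm_rpow_of_nonneg (abs_nonneg _) hq,
    Real.enorm_rpow_of_nonneg (abs_nonneg _) hq, Real.enorm_abs, Real.enorm_abs]

lemma sobolevSemi_nonneg : 0 ≤ sobolevSemi d s p g := by
  unfold sobolevSemi
  split_ifs <;> positivity

lemma ofReal_sobolevSemi_rpow_le (hs : 0 < s) (hp : 0 < p) :
    ENNReal.ofReal (sobolevSemi d s p g ^ p) ≤ sobolevEnergy volume s p g := by
  have hroot : ∀ I : ℝ, 0 ≤ I → (I ^ (1 / p)) ^ p = I := fun I hI => by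
    rw [← Real.rpow_mul hI, one_div_mul_cancel hp.ne', Real.rpow_one]
  simp only [sobolevSemi, sobolevEnergy, hs.ne', if_false]
  split_ifs
  · rw [hroot _ (by positivity)]
    refine (Real.ofReal_le_enorm _).trans <| (enorm_integral_le_lintegral_enorm _).trans_eq <|
      lintegral_congr fun x => ?_
    rw [Real.enorm_rpow_of_nonneg (norm_nonneg _) hp.le, enorm_norm]
  · rw [hroot _ (by positivity), finrank_euclideanSpace_fin]
    refine (Real.ofReal_le_enorm _).trans <| (enorm_integral_le_lintegral_enorm _).trans <|
      lintegral_mono fun x => (enorm_integral_le_lintegral_enorm _).trans <|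
      lintegral_mono fun y => ?_
    refine (enorm_div_norm_rpow_le _ (by positivity) _).trans_eq ?_
    rw [Real.enorm_rpow_of_nonneg (abs_nonneg _) hp.le, Real.enorm_abs]

end Comparison

section Shells

variable {E : Type*} [NormedAddCommGroup E] {R ε : ℝ}

/-- The closed spherical shell of radius `R` and relative width `ε`, the width being measured on
squared norms. -/
def shell (E : Type*) [NormedAddCommGroup E] (R ε : ℝ) : Set E :=
  {x | |‖x‖ ^ 2 - R ^ 2| ≤ ε * R ^ 2}

lemma isClosed_shell : IsClosed (shell E R ε) :=
  isClosed_le (by fun_prop) continuous_const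

lemma norm_le_of_mem_shell (hR : 0 < R) (hε : ε ≤ 1 / 2) {x : E} (hx : x ∈ shell E R ε) :
    ‖x‖ ≤ 5 / 4 * R := by
  have hub := (abs_le.1 (show |‖x‖ ^ 2 - R ^ 2| ≤ ε * R ^ 2 from hx)).2
  nlinarith [norm_nonneg x]

lemma le_norm_of_mem_shell (hR : 0 < R) (hε : ε ≤ 1 / 2) {x : E} (hx : x ∈ shell E R ε) :
    2 / 3 * R ≤ ‖x‖ := by
  have hlb := (abs_le.1 (show |‖x‖ ^ 2 - R ^ 2| ≤ ε * R ^ 2 from hx)).1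
  nlinarith [norm_nonneg x]

lemma disjoint_shell {R' ε' : ℝ} (hR : 0 < R) (hR' : 0 < R') (hε : ε ≤ 1 / 2) (hε' : ε' ≤ 1 / 2)
    (hRR' : R ≤ R' / 2) : Disjoint (shell E R ε) (shell E R' ε') :=
  Set.disjoint_left.2 fun x hx hx' => by
    linarith [norm_le_of_mem_shell hR hε hx, le_norm_of_mem_shell hR' hε' hx']

lemma ball_diff_ball_subset_shell (hR : 0 ≤ R) (hε : 0 ≤ ε) (hε1 : ε ≤ 1) :
    Metric.ball (0 : E) (R * (1 + ε / 3)) \ Metric.ball 0 R ⊆ shell E R ε := by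
  rintro x ⟨hx, hx'⟩
  rw [mem_ball_zero_iff] at hx hx'
  have hlb : R ^ 2 ≤ ‖x‖ ^ 2 := by gcongr; exact not_lt.1 hx'
  have hub : ‖x‖ ^ 2 ≤ (R * (1 + ε / 3)) ^ 2 := by gcongr
  have hpos : 0 ≤ ε * R ^ 2 := by positivity
  have hε2 : 0 ≤ R ^ 2 * (ε * (1 - ε)) :=
    mul_nonneg (sq_nonneg R) (mul_nonneg hε (sub_nonneg.2 hε1))
  exact show |‖x‖ ^ 2 - R ^ 2| ≤ ε * R ^ 2 from abs_le.2 ⟨by linarith, by linarith⟩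

lemma exists_mul_le_measure_shell [NormedSpace ℝ E] [FiniteDimensional ℝ E] [Nontrivial E]
    [MeasurableSpace E] [BorelSpace E] (μ : Measure E) [μ.IsAddHaarMeasure] :
    ∃ c : ℝ≥0, 0 < c ∧ ∀ R > 0, ∀ ε, 0 < ε → ε ≤ 1 →
      c * ENNReal.ofReal (R ^ Module.finrank ℝ E * ε) ≤ μ (shell E R ε) := by
  set n := Module.finrank ℝ E
  have hn : (1 : ℝ) ≤ n := by exact_mod_cast Nat.one_le_iff_ne_zero.2 Module.finrank_pos.ne'
  lift μ (Metric.ball 0 1) to ℝ≥0 using measure_ball_lt_top.ne with V hV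
  have hVpos : 0 < V := by
    rw [← ENNReal.coe_pos, hV]; exact Metric.measure_ball_pos μ 0 one_pos
  refine ⟨V / 3, by positivity, fun R hR ε hε hε1 => ?_⟩
  have hgrowth : R ^ n * ε / 3 ≤ (R * (1 + ε / 3)) ^ n - R ^ n := by
    have hbernoulli := one_add_mul_le_pow (a := ε / 3) (by linarith) n
    rw [mul_pow]
    have : ε / 3 ≤ n * (ε / 3) := le_mul_of_one_le_left (by positivity) hn
    nlinarith [pow_pos hR n]
  calc ((V / 3 : ℝ≥0) : ℝ≥0∞) * ENNReal.ofReal (R ^ n * ε)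
      = ENNReal.ofReal (R ^ n * ε / 3) * V := by
        rw [← ENNReal.ofReal_coe_nnreal, ← ENNReal.ofReal_coe_nnreal (p := V),
          ← ENNReal.ofReal_mul (by positivity), ← ENNReal.ofReal_mul (by positivity)]
        push_cast
        ring_nf
    _ ≤ ENNReal.ofReal ((R * (1 + ε / 3)) ^ n - R ^ n) * V := by gcongr
    _ = μ (Metric.ball 0 (R * (1 + ε / 3))) - μ (Metric.ball 0 R) := by
      rw [Measure.addHaar_ball _ _ (by positivity), Measure.addHaar_ball _ _ hR.le, ← hV,
        ← ENNReal.sub_mul (by simp), ENNReal.ofReal_sub _ (by positivity)]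
    _ ≤ μ (shell E R ε) :=
      le_measure_sdiff.trans (measure_mono (ball_diff_ball_subset_shell hR.le hε.le hε1))

end Shells

section ShellPotential

lemma volume_abs_sq_sub_le_and_le_abs {b c δ : ℝ} (hb : 0 < b) (hδ : 0 ≤ δ) :
    volume {t : ℝ | |t ^ 2 - c| ≤ δ ∧ b ≤ |t|} ≤ ENNReal.ofReal (2 * δ / b) := by
  set P : Set ℝ := {t | |t ^ 2 - c| ≤ δ ∧ b ≤ t}
  have hsub : {t : ℝ | |t ^ 2 - c| ≤ δ ∧ b ≤ |t|} ⊆ P ∪ -P := by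
    rintro t ⟨ht, hbt⟩
    rcases le_abs.1 hbt with h | h
    · exact Or.inl ⟨ht, h⟩
    · exact Or.inr ⟨by rwa [neg_sq], h⟩
  have hP : volume P ≤ ENNReal.ofReal (δ / b) := by
    refine (Real.volume_le_diam _).trans (Metric.ediam_le fun u hu v hv => ?_)
    rw [edist_dist, Real.dist_eq]
    refine ENNReal.ofReal_le_ofReal ((le_div_iff₀ hb).2 ?_)
    have hdiff : |u ^ 2 - v ^ 2| ≤ 2 * δ := by
      have hu' := abs_le.1 hu.1
      have hv' := abs_le.1 hv.1
      exact abs_le.2 ⟨by linarith, by linarith⟩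
    have hsum : 2 * b ≤ |u + v| := (by linarith [hu.2, hv.2] : 2 * b ≤ u + v).trans (le_abs_self _)
    rw [sq_sub_sq, abs_mul] at hdiff
    nlinarith [abs_nonneg (u - v)]
  calc volume {t : ℝ | |t ^ 2 - c| ≤ δ ∧ b ≤ |t|} ≤ volume P + volume (-P) :=
        (measure_mono hsub).trans (measure_union_le _ _)
    _ ≤ ENNReal.ofReal (δ / b) + ENNReal.ofReal (δ / b) := by
      rw [Measure.measure_neg]; gcongr
    _ = ENNReal.ofReal (2 * δ / b) := by
      rw [← ENNReal.ofReal_add (by positivity) (by positivity)]; ring_nf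

lemma setLIntegral_prod_comp_snd_le {X Y : Type*} [MeasurableSpace X] [MeasurableSpace Y]
    {μ : Measure X} {ν : Measure Y} [SFinite μ] [SFinite ν] {T : Set (X × Y)}
    (hT : MeasurableSet T) {δ : ℝ≥0∞} (hδ : ∀ z, μ {t | (t, z) ∈ T} ≤ δ) {K : Y → ℝ≥0∞}
    (hK : Measurable K) : ∫⁻ w in T, K w.2 ∂μ.prod ν ≤ δ * ∫⁻ z, K z ∂ν := by
  have hχ : Measurable (T.indicator (1 : X × Y → ℝ≥0∞)) := measurable_one.indicator hT
  calc ∫⁻ w in T, K w.2 ∂μ.prod ν = ∫⁻ w, K w.2 * T.indicator 1 w ∂μ.prod ν := by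
        rw [← lintegral_indicator hT]
        exact lintegral_congr fun w => by by_cases hw : w ∈ T <;> simp [hw]
    _ = ∫⁻ z, K z * ∫⁻ t, T.indicator 1 (t, z) ∂μ ∂ν := by
      rw [lintegral_prod_symm _ (by fun_prop)]
      exact lintegral_congr fun z =>
        lintegral_const_mul (K z) (hχ.comp (measurable_prodMk_right (y := z)))
    _ ≤ ∫⁻ z, K z * δ ∂ν := by
      refine lintegral_mono fun z => ?_
      gcongr
      exact (lintegral_indicator_one (measurable_prodMk_right hT)).trans_le (hδ z)
    _ = δ * ∫⁻ z, K z ∂ν := by rw [lintegral_mul_const _ hK, mul_comm]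

variable {n : ℕ} {a R ε : ℝ}

lemma setLIntegral_inv_enorm_sub_rpow_le_of_fibers (i : Fin (n + 1)) {r : ℝ}
    {S : Set (EuclideanSpace ℝ (Fin (n + 1)))} (hS : MeasurableSet S)
    {x : EuclideanSpace ℝ (Fin (n + 1))} (hSr : ∀ y ∈ S, ‖x - y‖ < r) (ha : 0 ≤ a)
    {δ : ℝ≥0∞} (hδ : ∀ z : Fin n → ℝ, volume {t | WithLp.toLp 2 (i.insertNth t z) ∈ S} ≤ δ) :
    ∫⁻ y in S, (‖x - y‖ₑ ^ a)⁻¹ ≤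
      δ * ∫⁻ w in Metric.ball (0 : Fin n → ℝ) r, (‖w‖ₑ ^ a)⁻¹ := by
  set split := (MeasurableEquiv.toLp 2 (Fin (n + 1) → ℝ)).symm.trans
    (MeasurableEquiv.piFinSuccAbove (fun _ => ℝ) i)
  have hsplit : MeasurePreserving split volume (volume.prod volume) :=
    (volume_preserving_piFinSuccAbove (fun _ => ℝ) i).comp (PiLp.volume_preserving_ofLp _)
  set K : (Fin n → ℝ) → ℝ≥0∞ := (Metric.ball 0 r).indicator fun w => (‖w‖ₑ ^ a)⁻¹
  have hK : Measurable K :=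
    (by fun_prop : Measurable fun w : Fin n → ℝ => (‖w‖ₑ ^ a)⁻¹).indicator
      Metric.isOpen_ball.measurableSet
  have hpt : ∀ y ∈ S, (‖x - y‖ₑ ^ a)⁻¹ ≤ K ((split x).2 - (split y).2) := by
    intro y hy
    have hle : ‖(split x).2 - (split y).2‖ ≤ ‖x - y‖ :=
      (pi_norm_le_iff_of_nonneg (norm_nonneg _)).2 fun j =>
        PiLp.norm_apply_le (x - y) (i.succAbove j)
    have hball : (split x).2 - (split y).2 ∈ Metric.ball 0 r :=
      mem_ball_zero_iff.2 (hle.trans_lt (hSr y hy))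
    simp only [K, Set.indicator_of_mem hball]
    gcongr
    exact enorm_le_iff_norm_le.2 hle
  have hpre : split ⁻¹' (split.symm ⁻¹' S) = S := by
    ext y
    simp
  calc ∫⁻ y in S, (‖x - y‖ₑ ^ a)⁻¹
      ≤ ∫⁻ y in S, K ((split x).2 - (split y).2) := setLIntegral_mono' hS hpt
    _ = ∫⁻ w in split.symm ⁻¹' S, K ((split x).2 - w.2) ∂volume.prod volume := by
      rw [← hsplit.setLIntegral_comp_preimage_emb split.measurableEmbedding, hpre]
    _ ≤ δ * ∫⁻ z, K ((split x).2 - z) :=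
      setLIntegral_prod_comp_snd_le (K := fun z => K ((split x).2 - z))
        (split.symm.measurable hS) hδ (by fun_prop)
    _ = δ * ∫⁻ w in Metric.ball (0 : Fin n → ℝ) r, (‖w‖ₑ ^ a)⁻¹ := by
      rw [lintegral_sub_left_eq_self, lintegral_indicator Metric.isOpen_ball.measurableSet]

lemma exists_norm_sq_le_mul_sq (y : EuclideanSpace ℝ (Fin (n + 1))) :
    ∃ i, ‖y‖ ^ 2 ≤ (n + 1) * y i ^ 2 := by
  by_contra! h
  have hlt := Finset.sum_lt_sum_of_nonempty (Finset.univ_nonempty (α := Fin (n + 1)))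
    fun i _ => h i
  rw [← Finset.mul_sum, ← EuclideanSpace.real_norm_sq_eq] at hlt
  simp at hlt

/-- The part of the shell where the `i`-th coordinate is bounded below, so that the shell is thin in
the direction of the `i`-th axis. -/
def shellSector (i : Fin (n + 1)) (R ε : ℝ) : Set (EuclideanSpace ℝ (Fin (n + 1))) :=
  shell (EuclideanSpace ℝ (Fin (n + 1))) R ε ∩ {y | R / (2 * (n + 1)) ≤ |y i|}

lemma measurableSet_shellSector (i : Fin (n + 1)) : MeasurableSet (shellSector i R ε) :=
  (isClosed_shell.inter (isClosed_le continuous_const (by fun_prop))).measurableSet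

lemma shell_subset_iUnion_shellSector (hR : 0 < R) (hε : ε ≤ 1 / 2) :
    shell (EuclideanSpace ℝ (Fin (n + 1))) R ε ⊆ ⋃ i, shellSector i R ε := by
  intro y hy
  obtain ⟨i, hi⟩ := exists_norm_sq_le_mul_sq y
  have hnorm : (2 / 3 * R) ^ 2 ≤ ‖y‖ ^ 2 := by
    have := le_norm_of_mem_shell hR hε hy
    gcongr
  have hsq : (R / (2 * (n + 1))) ^ 2 ≤ y i ^ 2 := by
    rw [div_pow, div_le_iff₀ (by positivity)]
    nlinarith [sq_nonneg (y i)]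
  exact Set.mem_iUnion.2 ⟨i, hy, (le_abs_self _).trans (sq_le_sq.1 hsq)⟩

lemma volume_fiber_shellSector_le (i : Fin (n + 1)) (hR : 0 < R) (hε : 0 ≤ ε) (z : Fin n → ℝ) :
    volume {t : ℝ | WithLp.toLp 2 (i.insertNth t z) ∈ shellSector i R ε} ≤
      ENNReal.ofReal (4 * (n + 1) * (R * ε)) := by
  have hwidth : 2 * (ε * R ^ 2) / (R / (2 * (n + 1))) = 4 * (n + 1) * (R * ε) := by
    field_simp
    ring
  rw [← hwidth]
  refine (measure_mono ?_).trans (volume_abs_sq_sub_le_and_le_abs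
    (c := R ^ 2 - ∑ j, z j ^ 2) (by positivity) (by positivity))
  rintro t ⟨hshell, hcoord⟩
  have hnorm : ‖WithLp.toLp 2 (i.insertNth t z : Fin (n + 1) → ℝ)‖ ^ 2 = t ^ 2 + ∑ j, z j ^ 2 := by
    simp [EuclideanSpace.real_norm_sq_eq, Fin.sum_univ_succAbove _ i]
  rw [shell, Set.mem_ofPred_eq, hnorm] at hshell
  exact ⟨by convert hshell using 2; ring, by simpa using hcoord⟩

lemma exists_setLIntegral_shellSector_inv_enorm_sub_rpow_le {α : ℝ} (hα : 1 < α)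
    (hαn : α ≤ n + 1) :
    ∃ C : ℝ≥0, ∀ R > 0, ∀ ε, 0 ≤ ε → ε ≤ 1 / 2 →
      ∀ x : EuclideanSpace ℝ (Fin (n + 1)), ‖x‖ ≤ 2 * R → ∀ i,
        ∫⁻ y in shellSector i R ε, (‖x - y‖ₑ ^ (n + 1 - α))⁻¹ ≤ C * ENNReal.ofReal (R ^ α * ε) := by
  have hn : 0 < n := by
    have : (1 : ℝ) < n + 1 := hα.trans_le hαn
    simpa using this
  have : Nonempty (Fin n) := ⟨⟨0, hn⟩⟩
  have ha : 0 ≤ n + 1 - α := sub_nonneg.2 hαn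
  obtain ⟨C, hC⟩ := exists_setLIntegral_ball_inv_enorm_rpow_le
    (volume : Measure (Fin n → ℝ)) ha (by simp; linarith)
  refine ⟨C * Real.toNNReal (4 * (n + 1) * 4 ^ (α - 1)), fun R hR ε hε hε2 x hx i => ?_⟩
  have hrad : ∀ y ∈ shellSector i R ε, ‖x - y‖ < 4 * R := fun y hy => by
    linarith [norm_sub_le x y, norm_le_of_mem_shell hR hε2 hy.1]
  have hpow : 4 * (n + 1) * (R * ε) * (4 * R) ^ (α - 1) =
      4 * (n + 1) * 4 ^ (α - 1) * (R ^ α * ε) := by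
    have hRα : (4 * R) ^ (α - 1) * R = 4 ^ (α - 1) * R ^ α := by
      rw [mul_rpow (by positivity) hR.le, mul_assoc, ← rpow_add_one hR.ne', sub_add_cancel]
    linear_combination 4 * (n + 1) * ε * hRα
  calc ∫⁻ y in shellSector i R ε, (‖x - y‖ₑ ^ (n + 1 - α))⁻¹
      ≤ ENNReal.ofReal (4 * (n + 1) * (R * ε)) *
          ∫⁻ w in Metric.ball (0 : Fin n → ℝ) (4 * R), (‖w‖ₑ ^ (n + 1 - α))⁻¹ :=
        setLIntegral_inv_enorm_sub_rpow_le_of_fibers i (measurableSet_shellSector i) hrad ha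
          (volume_fiber_shellSector_le i hR hε)
    _ ≤ ENNReal.ofReal (4 * (n + 1) * (R * ε)) * (C * ENNReal.ofReal ((4 * R) ^ (α - 1))) := by
      gcongr
      refine (hC _ (by positivity)).trans_eq ?_
      rw [Module.finrank_fin_fun, show (n - (n + 1 - α) : ℝ) = α - 1 by ring]
    _ = C * ENNReal.ofReal (4 * (n + 1) * (R * ε) * (4 * R) ^ (α - 1)) := by
      rw [mul_left_comm, ← ENNReal.ofReal_mul (by positivity)]
    _ = (C * Real.toNNReal (4 * (n + 1) * 4 ^ (α - 1)) : ℝ≥0) * ENNReal.ofReal (R ^ α * ε) := by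
      rw [hpow, ENNReal.ofReal_mul (by positivity), ENNReal.coe_mul, ENNReal.ofReal,
        mul_assoc (C : ℝ≥0∞)]

lemma exists_setLIntegral_shell_inv_enorm_sub_rpow_le {d : ℕ} {α : ℝ} (hα : 1 < α)
    (hαd : α ≤ d) :
    ∃ C : ℝ≥0, ∀ R > 0, ∀ ε, 0 ≤ ε → ε ≤ 1 / 2 → ∀ x : EuclideanSpace ℝ (Fin d), ‖x‖ ≤ 2 * R →
      ∫⁻ y in shell (EuclideanSpace ℝ (Fin d)) R ε, (‖x - y‖ₑ ^ (d - α))⁻¹ ≤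
        C * ENNReal.ofReal (R ^ α * ε) := by
  obtain ⟨n, rfl⟩ : ∃ n, d = n + 1 := Nat.exists_eq_succ_of_ne_zero fun h => by
    rw [h, Nat.cast_zero] at hαd
    linarith
  push_cast at hαd ⊢
  obtain ⟨C, hC⟩ := exists_setLIntegral_shellSector_inv_enorm_sub_rpow_le hα hαd
  refine ⟨(n + 1 : ℕ) * C, fun R hR ε hε hε2 x hx => ?_⟩
  calc ∫⁻ y in shell (EuclideanSpace ℝ (Fin (n + 1))) R ε, (‖x - y‖ₑ ^ (n + 1 - α))⁻¹
      ≤ ∑ i, ∫⁻ y in shellSector i R ε, (‖x - y‖ₑ ^ (n + 1 - α))⁻¹ :=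
        (lintegral_mono_set (shell_subset_iUnion_shellSector hR hε2)).trans
          ((lintegral_iUnion_le _ _).trans_eq (tsum_fintype _))
    _ ≤ ∑ _ : Fin (n + 1), C * ENNReal.ofReal (R ^ α * ε) :=
      Finset.sum_le_sum fun i _ => hC R hR ε hε hε2 x hx i
    _ = ((n + 1 : ℕ) * C : ℝ≥0) * ENNReal.ofReal (R ^ α * ε) := by
      rw [Finset.sum_const, Finset.card_univ, Fintype.card_fin, nsmul_eq_mul, ← mul_assoc]
      norm_cast

end ShellPotential

section ShellBumps

/-- The parameters of a radial bump function of a given height, concentrated on the spherical shell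
of a given radius and relative width. -/
structure ShellBump where
  height : ℝ
  radius : ℝ
  width : ℝ
  height_pos : 0 < height
  radius_pos : 0 < radius
  width_pos : 0 < width
  width_le_half : width ≤ 1 / 2

/-- The one-dimensional cutoff profile of all shell bumps. -/
noncomputable def lineCutoff : ContDiffBump (0 : ℝ) where
  rIn := 1 / 2
  rOut := 1
  rIn_pos := by norm_num
  rIn_lt_rOut := by norm_num

namespace ShellBump

variable (S : ShellBump)

/-- The size of `∫ |S|^γ` for the bump `S` in dimension `n`. -/
noncomputable def lpMass (n γ : ℝ) : ℝ :=
  S.height ^ γ * (S.radius ^ n * S.width)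

/-- The size of the `p`-th power of the `Ẇ^{s,p}` seminorm of the bump `S` in dimension `n`. -/
noncomputable def sobolevMass (n s p : ℝ) : ℝ :=
  S.height ^ p * (S.radius ^ (n - s * p) * S.width ^ (1 - s * p))

/-- The size of the mutual Coulomb energy of the `q`-th powers of two bumps in dimension `n`. -/
noncomputable def coulombMass (n q α : ℝ) (S T : ShellBump) : ℝ :=
  S.height ^ q * (S.radius ^ n * S.width) * (T.height ^ q * (T.radius ^ n * T.width)) *
    max S.radius T.radius ^ (α - n)

lemma lpMass_nonneg (n γ : ℝ) : 0 ≤ S.lpMass n γ := by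
  have := S.height_pos
  have := S.radius_pos
  have := S.width_pos
  unfold lpMass
  positivity

lemma sobolevMass_nonneg (n s p : ℝ) : 0 ≤ S.sobolevMass n s p := by
  have := S.height_pos
  have := S.radius_pos
  have := S.width_pos
  unfold sobolevMass
  positivity

lemma coulombMass_nonneg (n q α : ℝ) (S T : ShellBump) : 0 ≤ coulombMass n q α S T := by
  have := S.height_pos
  have := S.radius_pos
  have := S.width_pos
  have := T.height_pos
  have := T.radius_pos
  have := T.width_pos
  unfold coulombMass
  positivity

lemma coulombMass_comm (n q α : ℝ) (S T : ShellBump) :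
    coulombMass n q α S T = coulombMass n q α T S := by
  rw [coulombMass, coulombMass, max_comm, mul_comm (S.height ^ q * _)]

lemma coulombMass_of_le {n q α : ℝ} {S T : ShellBump} (hST : S.radius ≤ T.radius) :
    coulombMass n q α S T = S.height ^ q * (S.radius ^ n * S.width) *
      (T.height ^ q * (T.radius ^ α * T.width)) := by
  have hTα : T.radius ^ α = T.radius ^ n * T.radius ^ (α - n) := by
    rw [← rpow_add T.radius_pos, add_sub_cancel]
  rw [coulombMass, max_eq_right hST, hTα]
  ring

variable {E : Type*} [NormedAddCommGroup E]

/-- The bump function itself. -/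
noncomputable def toFun (x : E) : ℝ :=
  S.height * lineCutoff ((‖x‖ ^ 2 - S.radius ^ 2) / (S.width * S.radius ^ 2))

lemma toFun_nonneg (x : E) : 0 ≤ S.toFun x :=
  mul_nonneg S.height_pos.le lineCutoff.nonneg

lemma toFun_le_height (x : E) : S.toFun x ≤ S.height :=
  mul_le_of_le_one_right S.height_pos.le lineCutoff.le_one

lemma toFun_eq_of_norm_eq {x y : E} (hxy : ‖x‖ = ‖y‖) : S.toFun x = S.toFun y := by
  simp only [toFun, hxy]

lemma scale_pos : 0 < S.width * S.radius ^ 2 :=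
  mul_pos S.width_pos (pow_pos S.radius_pos 2)

lemma toFun_eq_height {x : E} (hx : x ∈ shell E S.radius (S.width / 2)) :
    S.toFun x = S.height := by
  rw [toFun, lineCutoff.one_of_mem_closedBall, mul_one]
  rw [mem_closedBall_zero_iff, Real.norm_eq_abs, abs_div, abs_of_pos S.scale_pos,
    div_le_iff₀ S.scale_pos]
  exact (show |‖x‖ ^ 2 - S.radius ^ 2| ≤ S.width / 2 * S.radius ^ 2 from hx).trans_eq
    (by simp only [lineCutoff]; ring)

lemma tsupport_toFun_subset : tsupport (S.toFun (E := E)) ⊆ shell E S.radius S.width := by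
  refine closure_minimal (fun x hx => ?_) isClosed_shell
  have hx' := lineCutoff.support_eq.subset (right_ne_zero_of_mul hx)
  rw [mem_ball_zero_iff, Real.norm_eq_abs, abs_div, abs_of_pos S.scale_pos,
    div_lt_iff₀ S.scale_pos] at hx'
  exact hx'.le.trans_eq (one_mul _)

lemma hasCompactSupport_toFun [ProperSpace E] : HasCompactSupport (S.toFun (E := E)) :=
  HasCompactSupport.of_support_subset_isCompact (isCompact_closedBall 0 (5 / 4 * S.radius))
    fun _ hx => mem_closedBall_zero_iff.2 <| norm_le_of_mem_shell S.radius_pos S.width_le_half <|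
      S.tsupport_toFun_subset (subset_tsupport _ hx)

lemma enorm_toFun_rpow_le_indicator {q : ℝ} (hq : 0 < q) :
    (fun x : E => ‖S.toFun x‖ₑ ^ q) ≤
      (shell E S.radius S.width).indicator fun _ => ENNReal.ofReal (S.height ^ q) := by
  intro x
  by_cases hx : x ∈ shell E S.radius S.width
  · beta_reduce
    rw [Set.indicator_of_mem hx, ← ENNReal.ofReal_rpow_of_nonneg S.height_pos.le hq.le,
      Real.enorm_of_nonneg (S.toFun_nonneg x)]
    gcongr
    exact S.toFun_le_height x
  · have hzero : S.toFun x = 0 := image_eq_zero_of_notMem_tsupport fun h =>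
      hx (S.tsupport_toFun_subset h)
    simp [hx, hzero, hq]

variable [InnerProductSpace ℝ E]

lemma contDiff_toFun : ContDiff ℝ ∞ (S.toFun (E := E)) :=
  contDiff_const.mul <| lineCutoff.contDiff.comp <|
    ((contDiff_norm_sq ℝ).sub contDiff_const).div_const _

lemma norm_fderiv_toFun (x : E) :
    ‖fderiv ℝ S.toFun x‖ =
      S.height * (‖deriv lineCutoff ((‖x‖ ^ 2 - S.radius ^ 2) / (S.width * S.radius ^ 2))‖ *
        (2 * ‖x‖ / (S.width * S.radius ^ 2))) := by
  have hinner : HasFDerivAt (fun y : E => (‖y‖ ^ 2 - S.radius ^ 2) / (S.width * S.radius ^ 2))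
      ((S.width * S.radius ^ 2)⁻¹ • 2 • innerSL ℝ x) x := by
    simp only [div_eq_inv_mul]
    exact ((hasStrictFDerivAt_norm_sq x).hasFDerivAt.sub_const _).const_mul _
  have hcutoff : Differentiable ℝ lineCutoff :=
    (lineCutoff.contDiff (n := 1)).differentiable one_ne_zero
  have hderiv := ((hcutoff _).hasDerivAt.comp_hasFDerivAt x hinner).const_mul S.height
  rw [show fderiv ℝ S.toFun x = _ from hderiv.fderiv, norm_smul, norm_smul, norm_smul,
    Real.norm_of_nonneg S.height_pos.le, Real.norm_of_nonneg (inv_nonneg.2 S.scale_pos.le),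
    two_nsmul, ← two_smul ℝ, norm_smul, innerSL_apply_norm, Real.norm_two]
  ring

variable (E) in
lemma exists_norm_fderiv_toFun_le : ∃ L > 0, ∀ (S : ShellBump) (x : E),
    ‖fderiv ℝ S.toFun x‖ ≤ S.height * (L / (S.width * S.radius)) := by
  obtain ⟨K, hK⟩ := (lineCutoff.contDiff (n := 1)).lipschitzWith_of_hasCompactSupport
    lineCutoff.hasCompactSupport one_ne_zero
  refine ⟨5 / 2 * (K + 1), by positivity, fun S x => ?_⟩
  have := S.height_pos
  have := S.radius_pos
  have := S.width_pos
  by_cases hx : x ∈ tsupport S.toFun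
  swap
  · rw [fderiv_of_notMem_tsupport ℝ hx, norm_zero]
    positivity
  have hnorm := norm_le_of_mem_shell S.radius_pos S.width_le_half (S.tsupport_toFun_subset hx)
  calc ‖fderiv ℝ S.toFun x‖
      ≤ S.height * ((K + 1) * (2 * (5 / 4 * S.radius) / (S.width * S.radius ^ 2))) := by
        rw [norm_fderiv_toFun]
        gcongr
        exact (norm_deriv_le_of_lipschitz hK).trans (by simp)
    _ = S.height * (5 / 2 * (K + 1) / (S.width * S.radius)) := by
      field_simp
      ring

lemma enorm_toFun_sub_toFun_le {B : ℝ} (hB : ∀ x : E, ‖fderiv ℝ S.toFun x‖ ≤ S.height * B)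
    (x y : E) : ‖S.toFun x - S.toFun y‖ₑ ≤
      ENNReal.ofReal S.height * ENNReal.ofReal (min 1 (B * ‖x - y‖)) := by
  rw [← ENNReal.ofReal_mul S.height_pos.le, ← ofReal_norm,
    mul_min_of_nonneg _ _ S.height_pos.le, mul_one, ← mul_assoc]
  refine ENNReal.ofReal_le_ofReal (le_min (abs_sub_le_of_nonneg_of_le (S.toFun_nonneg x)
    (S.toFun_le_height x) (S.toFun_nonneg y) (S.toFun_le_height y)) ?_)
  exact convex_univ.norm_image_sub_le_of_norm_fderiv_le
    (fun z _ => S.contDiff_toFun.differentiable (by simp) z)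
    (fun z _ => hB z) (Set.mem_univ y) (Set.mem_univ x)

variable [MeasurableSpace E]

lemma measurable_enorm_toFun_rpow [OpensMeasurableSpace E] (q : ℝ) :
    Measurable fun x : E => ‖S.toFun x‖ₑ ^ q :=
  S.contDiff_toFun.continuous.measurable.enorm.pow_const q

lemma lintegral_enorm_fderiv_toFun_rpow_le {p B : ℝ} (hp : 0 < p)
    (hB : ∀ x : E, ‖fderiv ℝ S.toFun x‖ ≤ S.height * B) (μ : Measure E) :
    ∫⁻ x, ‖fderiv ℝ S.toFun x‖ₑ ^ p ∂μ ≤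
      ENNReal.ofReal S.height ^ p * μ (shell E S.radius S.width) * ENNReal.ofReal (B ^ p) := by
  have hB0 : 0 ≤ B := nonneg_of_mul_nonneg_right ((norm_nonneg _).trans (hB 0)) S.height_pos
  have hsupp : support (fun x : E => ‖fderiv ℝ S.toFun x‖ₑ ^ p) ⊆ shell E S.radius S.width :=
    fun x hx => S.tsupport_toFun_subset <| support_fderiv_subset ℝ fun h =>
      hx (by simp [h, enorm, hp])
  rw [← setLIntegral_eq_of_support_subset hsupp]
  calc ∫⁻ x in shell E S.radius S.width, ‖fderiv ℝ S.toFun x‖ₑ ^ p ∂μ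
      ≤ ∫⁻ _ in shell E S.radius S.width, ENNReal.ofReal (S.height * B) ^ p ∂μ := by
        gcongr with x
        rw [← ofReal_norm]
        exact ENNReal.ofReal_le_ofReal (hB x)
    _ = _ := by
      rw [setLIntegral_const, ENNReal.ofReal_mul S.height_pos.le,
        ENNReal.mul_rpow_of_nonneg _ _ hp.le, ENNReal.ofReal_rpow_of_nonneg hB0 hp.le,
        mul_right_comm]

variable [BorelSpace E] [FiniteDimensional ℝ E]

lemma lintegral_lintegral_enorm_toFun_sub_rpow_div_le {p r B : ℝ} (hp : 0 < p)
    (hB : ∀ x : E, ‖fderiv ℝ S.toFun x‖ ≤ S.height * B) (μ : Measure E) [μ.IsAddHaarMeasure] :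
    ∫⁻ x, ∫⁻ y, ‖S.toFun x - S.toFun y‖ₑ ^ p / ‖x - y‖ₑ ^ r ∂μ ∂μ ≤
      2 * μ (shell E S.radius S.width) * (ENNReal.ofReal S.height ^ p *
        ∫⁻ z, ENNReal.ofReal (min 1 (B * ‖z‖)) ^ p / ‖z‖ₑ ^ r ∂μ) := by
  calc _ ≤ 2 * μ (shell E S.radius S.width) * ∫⁻ z, (ENNReal.ofReal S.height *
          ENNReal.ofReal (min 1 (B * ‖z‖))) ^ p / ‖z‖ₑ ^ r ∂μ :=
        lintegral_lintegral_enorm_sub_rpow_div_le isClosed_shell.measurableSet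
          ((subset_tsupport _).trans S.tsupport_toFun_subset) (by fun_prop)
          (S.enorm_toFun_sub_toFun_le hB) hp _
    _ = _ := by
      simp only [ENNReal.mul_rpow_of_nonneg _ _ hp.le, mul_div_assoc]
      rw [lintegral_const_mul _ (by fun_prop)]

variable [Nontrivial E]

lemma exists_mul_lpMass_le (γ : ℝ) (μ : Measure E) [μ.IsAddHaarMeasure] :
    ∃ c : ℝ≥0, 0 < c ∧ ∀ S : ShellBump,
      c * ENNReal.ofReal (S.lpMass (Module.finrank ℝ E) γ) ≤ ∫⁻ x, ‖S.toFun x‖ₑ ^ γ ∂μ := by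
  obtain ⟨c, hc, hshell⟩ := exists_mul_le_measure_shell μ
  refine ⟨c / 2, by positivity, fun S => ?_⟩
  have := S.height_pos
  have := S.radius_pos
  have := S.width_pos
  calc ((c / 2 : ℝ≥0) : ℝ≥0∞) * ENNReal.ofReal (S.lpMass (Module.finrank ℝ E) γ)
      = ENNReal.ofReal S.height ^ γ *
          (c * ENNReal.ofReal (S.radius ^ Module.finrank ℝ E * (S.width / 2))) := by
        rw [ENNReal.ofReal_rpow_of_pos S.height_pos, ← ENNReal.ofReal_coe_nnreal,
          ← ENNReal.ofReal_coe_nnreal (p := c), ← ENNReal.ofReal_mul (by positivity),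
          ← ENNReal.ofReal_mul (by positivity), ← ENNReal.ofReal_mul (by positivity), lpMass,
          rpow_natCast]
        push_cast
        ring_nf
    _ ≤ ENNReal.ofReal S.height ^ γ * μ (shell E S.radius (S.width / 2)) := by
      gcongr
      exact hshell _ S.radius_pos _ (by positivity) (by linarith [S.width_le_half])
    _ = ∫⁻ x in shell E S.radius (S.width / 2), ‖S.toFun x‖ₑ ^ γ ∂μ := by
      rw [← setLIntegral_const]
      refine setLIntegral_congr_fun isClosed_shell.measurableSet fun x hx => ?_
      rw [S.toFun_eq_height hx, Real.enorm_of_nonneg S.height_pos.le]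
    _ ≤ ∫⁻ x, ‖S.toFun x‖ₑ ^ γ ∂μ := setLIntegral_le_lintegral _ _

lemma exists_sobolevEnergy_toFun_le_measure_shell {s p : ℝ} (hs0 : 0 < s) (hs1 : s ≤ 1)
    (hp : 0 < p) (μ : Measure E) [μ.IsAddHaarMeasure] :
    ∃ C : ℝ≥0, ∀ S : ShellBump, sobolevEnergy μ s p S.toFun ≤
      C * (ENNReal.ofReal S.height ^ p * μ (shell E S.radius S.width) *
        ENNReal.ofReal ((S.width * S.radius) ^ (-(s * p)))) := by
  obtain ⟨L, hL0, hL⟩ := exists_norm_fderiv_toFun_le E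
  have hscale : ∀ S : ShellBump, ENNReal.ofReal ((L / (S.width * S.radius)) ^ (s * p)) =
      Real.toNNReal (L ^ (s * p)) * ENNReal.ofReal ((S.width * S.radius) ^ (-(s * p))) :=
    fun S => by
      have hpos := mul_pos S.width_pos S.radius_pos
      rw [div_rpow hL0.le hpos.le, div_eq_mul_inv, ← rpow_neg hpos.le,
        ENNReal.ofReal_mul (by positivity), ENNReal.ofReal]
  unfold sobolevEnergy
  rcases hs1.eq_or_lt with rfl | hs1
  · refine ⟨Real.toNNReal (L ^ (1 * p)), fun S => ?_⟩
    rw [if_pos rfl]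
    refine (S.lintegral_enorm_fderiv_toFun_rpow_le hp (hL S) μ).trans_eq ?_
    rw [mul_left_comm, ← hscale, one_mul]
  · obtain ⟨G, hG⟩ := exists_lintegral_min_one_mul_norm_rpow_div_le μ hs0 hs1 hp
    refine ⟨2 * G * Real.toNNReal (L ^ (s * p)), fun S => ?_⟩
    have hB : 0 < L / (S.width * S.radius) := div_pos hL0 (mul_pos S.width_pos S.radius_pos)
    rw [if_neg hs1.ne]
    calc _ ≤ 2 * μ (shell E S.radius S.width) * (ENNReal.ofReal S.height ^ p *
            ∫⁻ z, ENNReal.ofReal (min 1 (L / (S.width * S.radius) * ‖z‖)) ^ p /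
              ‖z‖ₑ ^ (Module.finrank ℝ E + s * p) ∂μ) :=
          S.lintegral_lintegral_enorm_toFun_sub_rpow_div_le hp (hL S) μ
      _ ≤ 2 * μ (shell E S.radius S.width) * (ENNReal.ofReal S.height ^ p *
            (G * ENNReal.ofReal ((L / (S.width * S.radius)) ^ (s * p)))) := by
        gcongr
        exact hG _ hB
      _ = _ := by
        rw [hscale]
        push_cast
        ring

end ShellBump

section Estimates

open ShellBump

variable {d : ℕ} {s p q α : ℝ}

lemma exists_volume_shell_le (hd : 1 < d) :
    ∃ C : ℝ≥0, ∀ S : ShellBump, volume (shell (EuclideanSpace ℝ (Fin d)) S.radius S.width) ≤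
      C * ENNReal.ofReal (S.radius ^ (d : ℝ) * S.width) := by
  obtain ⟨C, hC⟩ := exists_setLIntegral_shell_inv_enorm_sub_rpow_le
    (by exact_mod_cast hd) (le_refl (d : ℝ))
  refine ⟨C, fun S => ?_⟩
  simpa using hC S.radius S.radius_pos S.width S.width_pos.le S.width_le_half 0
    (by simpa using S.radius_pos.le)

lemma exists_sobolevEnergy_toFun_le (hd : 1 < d) (hs0 : 0 < s) (hs1 : s ≤ 1) (hp : 0 < p) :
    ∃ C : ℝ≥0, ∀ S : ShellBump,
      sobolevEnergy (volume : Measure (EuclideanSpace ℝ (Fin d))) s p S.toFun ≤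
        C * ENNReal.ofReal (S.sobolevMass d s p) := by
  have : Nontrivial (EuclideanSpace ℝ (Fin d)) :=
    Module.nontrivial_of_finrank_pos (R := ℝ) (by rw [finrank_euclideanSpace_fin]; omega)
  obtain ⟨V, hV⟩ := exists_volume_shell_le hd
  obtain ⟨K, hK⟩ := exists_sobolevEnergy_toFun_le_measure_shell hs0 hs1 hp
    (volume : Measure (EuclideanSpace ℝ (Fin d)))
  refine ⟨K * V, fun S => (hK S).trans ?_⟩
  have := S.height_pos
  have := S.radius_pos
  have := S.width_pos
  have hmass : S.height ^ p * (S.radius ^ (d : ℝ) * S.width) *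
      (S.width * S.radius) ^ (-(s * p)) = S.sobolevMass d s p := by
    rw [sobolevMass, mul_rpow S.width_pos.le S.radius_pos.le, sub_eq_add_neg, sub_eq_add_neg,
      rpow_add S.radius_pos, rpow_add S.width_pos, rpow_one]
    ring
  calc _ ≤ K * (ENNReal.ofReal S.height ^ p *
          (V * ENNReal.ofReal (S.radius ^ (d : ℝ) * S.width)) *
          ENNReal.ofReal ((S.width * S.radius) ^ (-(s * p)))) := by
        gcongr
        exact hV S
    _ = (K * V : ℝ≥0) * ENNReal.ofReal (S.sobolevMass d s p) := by
      rw [← hmass, ENNReal.ofReal_mul (p := S.height ^ p * _) (by positivity),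
        ENNReal.ofReal_mul (p := S.height ^ p) (by positivity),
        ENNReal.ofReal_rpow_of_pos S.height_pos]
      push_cast
      ring

lemma exists_rieszEnergy_toFun_le (hq : 0 < q) (hα : 1 < α) (hαd : α ≤ d) :
    ∃ C : ℝ≥0, ∀ S T : ShellBump,
      rieszEnergy (volume : Measure (EuclideanSpace ℝ (Fin d))) (d - α)
        (fun x => ‖S.toFun x‖ₑ ^ q) (fun x => ‖T.toFun x‖ₑ ^ q) ≤
          C * ENNReal.ofReal (coulombMass d q α S T) := by
  have hd : 1 < d := by exact_mod_cast hα.trans_le hαd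
  obtain ⟨V, hV⟩ := exists_volume_shell_le hd
  obtain ⟨W, hW⟩ := exists_setLIntegral_shell_inv_enorm_sub_rpow_le hα hαd
  refine ⟨V * W, fun S T => ?_⟩
  wlog hST : S.radius ≤ T.radius generalizing S T
  · rw [rieszEnergy_comm _ (S.measurable_enorm_toFun_rpow q)
      (T.measurable_enorm_toFun_rpow q), coulombMass_comm]
    exact this T S (le_of_not_ge hST)
  have hRiesz := fun x (hx : x ∈ shell (EuclideanSpace ℝ (Fin d)) S.radius S.width) =>
    hW T.radius T.radius_pos T.width T.width_pos.le T.width_le_half x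
      (by linarith [norm_le_of_mem_shell S.radius_pos S.width_le_half hx, S.radius_pos])
  calc _ ≤ ENNReal.ofReal (S.height ^ q) *
          volume (shell (EuclideanSpace ℝ (Fin d)) S.radius S.width) *
          (ENNReal.ofReal (T.height ^ q) * (W * ENNReal.ofReal (T.radius ^ α * T.width))) :=
        rieszEnergy_le_of_le_indicator isClosed_shell.measurableSet isClosed_shell.measurableSet
          (S.enorm_toFun_rpow_le_indicator hq) (T.enorm_toFun_rpow_le_indicator hq) hRiesz
    _ ≤ ENNReal.ofReal (S.height ^ q) * (V * ENNReal.ofReal (S.radius ^ (d : ℝ) * S.width)) *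
          (ENNReal.ofReal (T.height ^ q) * (W * ENNReal.ofReal (T.radius ^ α * T.width))) := by
      gcongr
      exact hV S
    _ = (V * W : ℝ≥0) * ENNReal.ofReal (coulombMass d q α S T) := by
      have := S.height_pos
      have := S.radius_pos
      have := S.width_pos
      have := T.height_pos
      have := T.radius_pos
      have := T.width_pos
      rw [coulombMass_of_le hST, ENNReal.ofReal_mul (p := S.height ^ q * _) (by positivity),
        ENNReal.ofReal_mul (p := S.height ^ q) (by positivity),
        ENNReal.ofReal_mul (p := T.height ^ q) (by positivity)]
      push_cast
      ring

end Estimates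

end ShellBumps

section Superposition

open ShellBump

variable {d N : ℕ} {s γ p q α β₁ β₂ : ℝ}

/-- Families of shell bumps whose radii differ pairwise by a factor of at least `2`, so that the
supports are disjoint. -/
def SeparatedRadii (S : Fin N → ShellBump) : Prop :=
  Pairwise fun i j => (S i).radius ≤ (S j).radius / 2 ∨ (S j).radius ≤ (S i).radius / 2

lemma SeparatedRadii.disjoint_tsupport {S : Fin N → ShellBump} (hS : SeparatedRadii S)
    (E : Type*) [NormedAddCommGroup E] :
    Pairwise (Disjoint on fun i => tsupport ((S i).toFun (E := E))) := fun i j hij => by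
  refine Disjoint.mono (S i).tsupport_toFun_subset (S j).tsupport_toFun_subset ?_
  rcases hS hij with h | h
  · exact disjoint_shell (S i).radius_pos (S j).radius_pos (S i).width_le_half
      (S j).width_le_half h
  · exact (disjoint_shell (S j).radius_pos (S i).radius_pos (S j).width_le_half
      (S i).width_le_half h).symm

lemma SeparatedRadii.enorm_sum_rpow {S : Fin N → ShellBump} (hS : SeparatedRadii S)
    {E : Type*} [NormedAddCommGroup E] (hq : 0 < q) (x : E) :
    ‖∑ i, (S i).toFun x‖ₑ ^ q = ∑ i, ‖(S i).toFun x‖ₑ ^ q :=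
  map_sum_of_pairwise_disjoint_support (φ := fun t : ℝ => ‖t‖ₑ ^ q)
    (fun i j hij => (hS.disjoint_tsupport E hij).mono (subset_tsupport _) (subset_tsupport _))
    (by simp [hq]) x

lemma exists_mul_sum_lpMass_le (hd : 0 < d) (hγ : 0 < γ) :
    ∃ c : ℝ≥0, 0 < c ∧ ∀ (N : ℕ) (S : Fin N → ShellBump), SeparatedRadii S →
      c * ENNReal.ofReal (∑ i, (S i).lpMass d γ) ≤
        ∫⁻ x : EuclideanSpace ℝ (Fin d), ‖∑ i, (S i).toFun x‖ₑ ^ γ := by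
  have : Nonempty (Fin d) := ⟨⟨0, hd⟩⟩
  obtain ⟨c, hc, h⟩ := exists_mul_lpMass_le γ (volume : Measure (EuclideanSpace ℝ (Fin d)))
  rw [finrank_euclideanSpace_fin] at h
  refine ⟨c, hc, fun N S hS => ?_⟩
  simp only [hS.enorm_sum_rpow hγ]
  rw [lintegral_finsetSum _ fun i _ => measurable_enorm_toFun_rpow (S i) γ,
    ENNReal.ofReal_sum_of_nonneg fun i _ => (S i).lpMass_nonneg _ _, Finset.mul_sum]
  exact Finset.sum_le_sum fun i _ => h (S i)

lemma exists_sobolevEnergy_sum_le (hd : 1 < d) (hs0 : 0 < s) (hs1 : s ≤ 1) (hp : 0 < p) :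
    ∃ C : ℝ≥0, ∀ (N : ℕ) (S : Fin N → ShellBump), SeparatedRadii S →
      sobolevEnergy (volume : Measure (EuclideanSpace ℝ (Fin d))) s p
        (fun x => ∑ i, (S i).toFun x) ≤ C * ENNReal.ofReal (∑ i, (S i).sobolevMass d s p) := by
  obtain ⟨C, hC⟩ := exists_sobolevEnergy_toFun_le hd hs0 hs1 hp
  refine ⟨2 ^ p * C, fun N S hS => (sobolevEnergy_sum_le (fun i =>
    (S i).contDiff_toFun.differentiable (by simp)) (hS.disjoint_tsupport _) hp).trans ?_⟩
  rw [ENNReal.ofReal_sum_of_nonneg fun i _ => (S i).sobolevMass_nonneg _ _ _, ENNReal.coe_mul,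
    ENNReal.coe_rpow_of_nonneg _ hp.le, ENNReal.coe_ofNat, mul_assoc,
    Finset.mul_sum _ _ (C : ℝ≥0∞)]
  exact mul_le_mul' le_rfl (Finset.sum_le_sum fun i _ => hC (S i))

lemma exists_rieszEnergy_sum_le (hq : 0 < q) (hα : 1 < α) (hαd : α ≤ d) :
    ∃ C : ℝ≥0, ∀ (N : ℕ) (S : Fin N → ShellBump), SeparatedRadii S →
      rieszEnergy (volume : Measure (EuclideanSpace ℝ (Fin d))) (d - α)
        (fun x => ‖∑ i, (S i).toFun x‖ₑ ^ q) (fun x => ‖∑ i, (S i).toFun x‖ₑ ^ q) ≤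
          C * ENNReal.ofReal (∑ i, ∑ j, coulombMass d q α (S i) (S j)) := by
  obtain ⟨C, hC⟩ := exists_rieszEnergy_toFun_le hq hα hαd
  refine ⟨C, fun N S hS => ?_⟩
  simp only [hS.enorm_sum_rpow hq]
  rw [rieszEnergy_sum _ fun i => measurable_enorm_toFun_rpow (S i) q,
    ENNReal.ofReal_sum_of_nonneg fun i _ => Finset.sum_nonneg fun j _ => coulombMass_nonneg ..,
    Finset.mul_sum]
  refine Finset.sum_le_sum fun i _ => ?_
  rw [ENNReal.ofReal_sum_of_nonneg fun j _ => coulombMass_nonneg .., Finset.mul_sum]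
  exact Finset.sum_le_sum fun j _ => hC (S i) (S j)

end Superposition

section Interpolation

open ShellBump

variable {d : ℕ} {s γ p q α β₁ β₂ C : ℝ}

/-- The interpolation inequality with constant `C` on nonnegative smooth compactly supported radial
functions. -/
def RadialInterpolation (d : ℕ) (s γ p q α β₁ β₂ C : ℝ) : Prop :=
  ∀ g : EuclideanSpace ℝ (Fin d) → ℝ, (∀ x y, ‖x‖ = ‖y‖ → g x = g y) → (∀ x, 0 ≤ g x) →
    ContDiff ℝ ∞ g → HasCompactSupport g →
      (∫ x, |g x| ^ γ) ^ (1 / γ) ≤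
        C * sobolevSemi d s p g ^ (β₁ * p) * coulombEnergy d q α g ^ β₂

lemma ofReal_integral_abs_rpow {E : Type*} [NormedAddCommGroup E] [MeasurableSpace E]
    [OpensMeasurableSpace E] {μ : Measure E} [IsFiniteMeasureOnCompacts μ] {g : E → ℝ} (hγ : 0 < γ)
    (hg : Continuous g) (hcomp : HasCompactSupport g) :
    ENNReal.ofReal (∫ x, |g x| ^ γ ∂μ) = ∫⁻ x, ‖g x‖ₑ ^ γ ∂μ := by
  have hint : Integrable (fun x => |g x| ^ γ) μ :=
    (hg.abs.rpow_const fun _ => Or.inr hγ.le).integrable_of_hasCompactSupport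
      (hcomp.comp_left (g := fun t => |t| ^ γ) (by simp [hγ.ne']))
  rw [ofReal_integral_eq_lintegral_ofReal hint (ae_of_all _ fun x => by positivity)]
  refine lintegral_congr fun x => ?_
  rw [← ENNReal.ofReal_rpow_of_nonneg (abs_nonneg _) hγ.le, Real.enorm_eq_ofReal_abs]

lemma RadialInterpolation.lintegral_rpow_le (h : RadialInterpolation d s γ p q α β₁ β₂ C)
    (hs : 0 < s) (hγ : 0 < γ) (hp : 0 < p) (hq : 0 ≤ q) (hα : α ≤ d) (hβ₁ : 0 ≤ β₁)
    (hβ₂ : 0 ≤ β₂) {g : EuclideanSpace ℝ (Fin d) → ℝ} (hrad : ∀ x y, ‖x‖ = ‖y‖ → g x = g y)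
    (hnonneg : ∀ x, 0 ≤ g x) (hg : ContDiff ℝ ∞ g) (hcomp : HasCompactSupport g) :
    (∫⁻ x, ‖g x‖ₑ ^ γ) ^ (1 / γ) ≤ ENNReal.ofReal C * sobolevEnergy volume s p g ^ β₁ *
      rieszEnergy volume (d - α) (fun x => ‖g x‖ₑ ^ q) (fun x => ‖g x‖ₑ ^ q) ^ β₂ := by
  have hcoul : 0 ≤ coulombEnergy d q α g :=
    integral_nonneg fun x => integral_nonneg fun y => by positivity
  have hsemi := rpow_nonneg (sobolevSemi_nonneg (d := d) (s := s) (p := p) (g := g)) p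
  calc (∫⁻ x, ‖g x‖ₑ ^ γ) ^ (1 / γ) = ENNReal.ofReal ((∫ x, |g x| ^ γ) ^ (1 / γ)) := by
        rw [← ofReal_integral_abs_rpow hγ hg.continuous hcomp, ENNReal.ofReal_rpow_of_nonneg
          (integral_nonneg fun x => by positivity) (by positivity)]
    _ ≤ ENNReal.ofReal (C * (sobolevSemi d s p g ^ p) ^ β₁ * coulombEnergy d q α g ^ β₂) := by
      rw [← rpow_mul sobolevSemi_nonneg, mul_comm p]
      exact ENNReal.ofReal_le_ofReal (h g hrad hnonneg hg hcomp)
    _ = ENNReal.ofReal C * ENNReal.ofReal (sobolevSemi d s p g ^ p) ^ β₁ *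
          ENNReal.ofReal (coulombEnergy d q α g) ^ β₂ := by
      rw [ENNReal.ofReal_mul' (rpow_nonneg hcoul _), ENNReal.ofReal_mul' (rpow_nonneg hsemi _),
        ENNReal.ofReal_rpow_of_nonneg hsemi hβ₁, ENNReal.ofReal_rpow_of_nonneg hcoul hβ₂]
    _ ≤ _ := by
      gcongr
      · exact ofReal_sobolevSemi_rpow_le hs hp
      · exact ofReal_coulombEnergy_le hq hα

lemma RadialInterpolation.lintegral_sum_rpow_le
    (h : RadialInterpolation d s γ p q α β₁ β₂ C) (hs : 0 < s) (hγ : 0 < γ) (hp : 0 < p)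
    (hq : 0 ≤ q) (hα : α ≤ d) (hβ₁ : 0 ≤ β₁) (hβ₂ : 0 ≤ β₂) {N : ℕ} (S : Fin N → ShellBump) :
    (∫⁻ x : EuclideanSpace ℝ (Fin d), ‖∑ i, (S i).toFun x‖ₑ ^ γ) ^ (1 / γ) ≤
      ENNReal.ofReal C *
        sobolevEnergy (volume : Measure (EuclideanSpace ℝ (Fin d))) s p
          (fun x => ∑ i, (S i).toFun x) ^ β₁ *
        rieszEnergy (volume : Measure (EuclideanSpace ℝ (Fin d))) (d - α)
          (fun x => ‖∑ i, (S i).toFun x‖ₑ ^ q) (fun x => ‖∑ i, (S i).toFun x‖ₑ ^ q) ^ β₂ := by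
  have hcomp : HasCompactSupport fun x : EuclideanSpace ℝ (Fin d) => ∑ i, (S i).toFun x := by
    rw [← Finset.sum_fn]
    exact Finset.sum_induction _ HasCompactSupport (fun _ _ => .add) .zero fun i _ =>
      (S i).hasCompactSupport_toFun
  exact h.lintegral_rpow_le hs hγ hp hq hα hβ₁ hβ₂
    (fun x y hxy => Finset.sum_congr rfl fun i _ => (S i).toFun_eq_of_norm_eq hxy)
    (fun x => Finset.sum_nonneg fun i _ => (S i).toFun_nonneg x)
    (ContDiff.sum fun i _ => (S i).contDiff_toFun) hcomp

lemma RadialInterpolation.exists_sum_lpMass_rpow_le (h : RadialInterpolation d s γ p q α β₁ β₂ C)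
    (hs0 : 0 < s) (hs1 : s ≤ 1) (hγ : 0 < γ) (hp : 0 < p) (hq : 0 < q) (hα : 1 < α)
    (hαd : α ≤ d) (hβ₁ : 0 ≤ β₁) (hβ₂ : 0 ≤ β₂) :
    ∃ K : ℝ≥0, ∀ (N : ℕ) (S : Fin N → ShellBump), SeparatedRadii S →
      (∑ i, (S i).lpMass d γ) ^ (1 / γ) ≤ K * (∑ i, (S i).sobolevMass d s p) ^ β₁ *
        (∑ i, ∑ j, coulombMass d q α (S i) (S j)) ^ β₂ := by
  have hd : 1 < d := by exact_mod_cast hα.trans_le hαd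
  obtain ⟨c, hc, hlp⟩ := exists_mul_sum_lpMass_le (by omega : 0 < d) hγ
  obtain ⟨A, hA⟩ := exists_sobolevEnergy_sum_le hd hs0 hs1 hp
  obtain ⟨B, hB⟩ := exists_rieszEnergy_sum_le hq hα hαd
  refine ⟨C.toNNReal * A ^ β₁ * B ^ β₂ / c ^ (1 / γ), fun N S hS => ?_⟩
  set X := ∑ i, (S i).lpMass d γ
  set Y := ∑ i, (S i).sobolevMass d s p
  set Z := ∑ i, ∑ j, coulombMass d q α (S i) (S j)
  have hX : 0 ≤ X := Finset.sum_nonneg fun i _ => lpMass_nonneg ..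
  have hY : 0 ≤ Y := Finset.sum_nonneg fun i _ => sobolevMass_nonneg ..
  have hZ : 0 ≤ Z := Finset.sum_nonneg fun i _ => Finset.sum_nonneg fun j _ =>
    coulombMass_nonneg ..
  have hinterp : (c * ENNReal.ofReal X) ^ (1 / γ) ≤
      C.toNNReal * (A * ENNReal.ofReal Y) ^ β₁ * (B * ENNReal.ofReal Z) ^ β₂ := by
    refine (ENNReal.rpow_le_rpow (hlp N S hS) (by positivity)).trans <|
      (h.lintegral_sum_rpow_le hs0 hγ hp hq.le hαd hβ₁ hβ₂ S).trans ?_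
    gcongr
    · rfl
    · exact hA N S hS
    · exact hB N S hS
  have hreal := ENNReal.toReal_mono (by finiteness) hinterp
  simp only [ENNReal.toReal_mul, ← ENNReal.toReal_rpow, ENNReal.coe_toReal,
    ENNReal.toReal_ofReal, hX, hY, hZ] at hreal
  rw [mul_rpow (by positivity) hX, mul_rpow (by positivity) hY, mul_rpow (by positivity) hZ]
    at hreal
  push_cast
  rw [div_mul_eq_mul_div, div_mul_eq_mul_div, le_div_iff₀ (by positivity)]
  linarith

end Interpolation

section Scaling

/-- The shell bump with parameters `(exp (t * a), exp (t * b), exp (t * c))`. The endpoint case uses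
many bumps on one such curve. -/
noncomputable def expBump (a b c t : ℝ) (h : exp (t * c) ≤ 1 / 2) : ShellBump where
  height := exp (t * a)
  radius := exp (t * b)
  width := exp (t * c)
  height_pos := exp_pos _
  radius_pos := exp_pos _
  width_pos := exp_pos _
  width_le_half := h

variable {a b c t u n s γ p q α β₁ β₂ : ℝ}

lemma lpMass_expBump (h : exp (t * c) ≤ 1 / 2) :
    (expBump a b c t h).lpMass n γ = exp (t * (a * γ + b * n + c)) := by
  simp only [ShellBump.lpMass, expBump, ← exp_mul, ← exp_add]
  ring_nf

lemma sobolevMass_expBump (h : exp (t * c) ≤ 1 / 2) :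
    (expBump a b c t h).sobolevMass n s p =
      exp (t * (a * p + b * (n - s * p) + c * (1 - s * p))) := by
  simp only [ShellBump.sobolevMass, expBump, ← exp_mul, ← exp_add]
  ring_nf

lemma coulombMass_expBump (ht : exp (t * c) ≤ 1 / 2) (hu : exp (u * c) ≤ 1 / 2)
    (habc : a * q + b * n + c = (n - α) / 2 * b) :
    ShellBump.coulombMass n q α (expBump a b c t ht) (expBump a b c u hu) =
      exp (-((n - α) / 2 * |t * b - u * b|)) := by
  simp only [ShellBump.coulombMass, expBump]
  have hmax : max (t * b) (u * b) = (t * b + u * b + |t * b - u * b|) / 2 := by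
    linarith [max_add_min (t * b) (u * b), max_sub_min_eq_abs' (t * b) (u * b)]
  rw [← exp_monotone.map_max, hmax]
  simp only [← exp_mul, ← exp_add]
  congr 1
  linear_combination (t + u) * habc

lemma exists_spread_out (N : ℕ) (hb : b ≠ 0) (hc : c ≠ 0) (L : ℝ) :
    ∃ t : Fin N → ℝ, (∀ i, t i * c ≤ -L) ∧ Pairwise fun i j => L ≤ |t i * b - t j * b| := by
  have hcb : 0 < |c| * |b| := by positivity
  obtain ⟨T, hT0, hTc, hTb⟩ : ∃ T ≥ 0, L ≤ T * c ^ 2 ∧ L ≤ T * (|c| * |b|) := by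
    refine ⟨max 0 (max (L / c ^ 2) (L / (|c| * |b|))), le_max_left _ _, ?_, ?_⟩
    · rw [← div_le_iff₀ (by positivity)]
      exact (le_max_left _ _).trans (le_max_right _ _)
    · rw [← div_le_iff₀ hcb]
      exact (le_max_right _ _).trans (le_max_right _ _)
  refine ⟨fun i => -((i : ℕ) + 1) * (T * c), fun i => ?_, fun i j hij => ?_⟩
  · have : 0 ≤ (i : ℕ) * (T * c ^ 2) := by positivity
    linarith
  · have hgap : (1 : ℝ) ≤ |((j : ℕ) : ℝ) - (i : ℕ)| := by
      have : (1 : ℤ) ≤ |((j : ℕ) : ℤ) - (i : ℕ)| := Int.one_le_abs (by omega)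
      exact_mod_cast this
    calc L ≤ T * (|c| * |b|) := hTb
      _ ≤ |((j : ℕ) : ℝ) - (i : ℕ)| * (T * (|c| * |b|)) :=
        le_mul_of_one_le_left (by positivity) hgap
      _ = |-((i : ℕ) + 1) * (T * c) * b - -((j : ℕ) + 1) * (T * c) * b| := by
        rw [← abs_of_nonneg hT0, ← abs_mul, ← abs_mul, ← abs_mul, abs_of_nonneg hT0]
        ring_nf

lemma sum_sum_le_two_mul_card {ι : Type*} [Fintype ι] {f : ι → ι → ℝ} (hdiag : ∀ i, f i i ≤ 1)
    (hoff : Pairwise fun i j => f i j ≤ (Fintype.card ι : ℝ)⁻¹) :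
    ∑ i, ∑ j, f i j ≤ 2 * Fintype.card ι := by
  classical
  have hf : ∀ i j, f i j ≤ (if i = j then 1 else 0) + (Fintype.card ι : ℝ)⁻¹ := fun i j => by
    split_ifs with hij
    · exact hij ▸ (hdiag i).trans (le_add_of_nonneg_right (by positivity))
    · exact (hoff hij).trans_eq (zero_add _).symm
  calc ∑ i, ∑ j, f i j ≤ ∑ i : ι, ∑ j : ι, ((if i = j then 1 else 0) + (Fintype.card ι : ℝ)⁻¹) :=
        Finset.sum_le_sum fun i _ => Finset.sum_le_sum fun j _ => hf i j
    _ ≤ ∑ _i : ι, 2 := Finset.sum_le_sum fun i _ => by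
        simp only [Finset.sum_add_distrib, Finset.sum_ite_eq, Finset.mem_univ, if_true,
          Finset.sum_const, Finset.card_univ, nsmul_eq_mul]
        linarith [mul_inv_le_one (a := (Fintype.card ι : ℝ))]
    _ = 2 * Fintype.card ι := by simp [mul_comm]

lemma exists_unit_mass_exponents (hγ : γ ≠ 0) (heq1 : β₁ * p + 2 * β₂ * q = 1)
    (heq2 : (n - s * p) * β₁ + (n + α) * β₂ = n / γ)
    (hthin : 1 / γ = (1 - s * p) * β₁ + 2 * β₂) (hqp : q * (1 - s * p) ≠ p)
    (hD : p * (n + α) - 2 * q * (n - s * p) ≠ 0) :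
    ∃ a b c : ℝ, b ≠ 0 ∧ c ≠ 0 ∧ a * γ + b * n + c = 0 ∧
      a * p + b * (n - s * p) + c * (1 - s * p) = 0 ∧
      a * q + b * n + c = (n - α) / 2 * b := by
  -- `(a, b, c)` is the cross product of `(p, n - s * p, 1 - s * p)` and `(2 * q, n + α, 2)`.
  set a := 2 * (n - s * p) - (1 - s * p) * (n + α)
  set b := 2 * (q * (1 - s * p) - p)
  set c := p * (n + α) - 2 * q * (n - s * p)
  refine ⟨a, b, c, mul_ne_zero two_ne_zero (sub_ne_zero.2 hqp), hD, ?_,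
    by ring, by ring⟩
  rw [eq_div_iff hγ] at heq2
  rw [div_eq_iff hγ] at hthin
  linear_combination c * hthin - b * heq2 - a * γ * heq1

lemma exists_separatedRadii_unit_mass (hα : α < n) (hb : b ≠ 0) (hc : c ≠ 0)
    (hlp : a * γ + b * n + c = 0) (hsob : a * p + b * (n - s * p) + c * (1 - s * p) = 0)
    (hcoul : a * q + b * n + c = (n - α) / 2 * b) (N : ℕ) :
    ∃ S : Fin N → ShellBump, SeparatedRadii S ∧ (∀ i, (S i).lpMass n γ = 1) ∧
      (∀ i, (S i).sobolevMass n s p = 1) ∧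
      ∑ i, ∑ j, ShellBump.coulombMass n q α (S i) (S j) ≤ 2 * N := by
  have hm : 0 < (n - α) / 2 := by linarith
  obtain ⟨t, hwidth, hspread⟩ := exists_spread_out N hb hc (max (log 2) (log N / ((n - α) / 2)))
  have hhalf : ∀ i, exp (t i * c) ≤ 1 / 2 := fun i => by
    rw [← le_log_iff_exp_le (by norm_num), one_div, log_inv]
    exact (hwidth i).trans (neg_le_neg (le_max_left _ _))
  refine ⟨fun i => expBump a b c (t i) (hhalf i), fun i j hij => ?_, fun i => ?_, fun i => ?_, ?_⟩
  · have hfar := (le_max_left _ _).trans (hspread hij)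
    simp only [expBump]
    rw [← exp_log two_pos, ← exp_sub, ← exp_sub, exp_le_exp, exp_le_exp]
    rcases le_abs.1 hfar with h | h
    · exact Or.inr (by linarith)
    · exact Or.inl (by linarith)
  · rw [lpMass_expBump, hlp, mul_zero, exp_zero]
  · rw [sobolevMass_expBump, hsob, mul_zero, exp_zero]
  · simp only [coulombMass_expBump _ _ hcoul]
    refine (sum_sum_le_two_mul_card (fun i => by simp) fun i j hij => ?_).trans_eq (by simp)
    have hN : (0 : ℝ) < N := by exact_mod_cast i.pos
    beta_reduce
    rw [Fintype.card_fin, ← le_log_iff_exp_le (inv_pos.2 hN), log_inv, neg_le_neg_iff,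
      ← div_le_iff₀' hm]
    exact (le_max_right _ _).trans (hspread hij)

end Scaling

section Failure

variable {d : ℕ} {s γ p q α β₁ β₂ C : ℝ}

lemma not_radialInterpolation_of_one_div_lt (hs0 : 0 < s) (hs1 : s ≤ 1) (hγ : 0 < γ) (hp : 0 < p)
    (hq : 0 < q) (hα : 1 < α) (hαd : α ≤ d) (hβ₁ : 0 ≤ β₁) (hβ₂ : 0 ≤ β₂)
    (hthin : 1 / γ < (1 - s * p) * β₁ + 2 * β₂) : ¬ RadialInterpolation d s γ p q α β₁ β₂ C := by
  intro h
  obtain ⟨K, hK⟩ := h.exists_sum_lpMass_rpow_le hs0 hs1 hγ hp hq hα hαd hβ₁ hβ₂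
  set e := (1 - s * p) * β₁ + 2 * β₂ - 1 / γ with he
  have hlim : Filter.Tendsto (fun ε : ℝ => K * ε ^ e) (nhdsWithin 0 (Set.Ioi 0)) (nhds 0) := by
    have hcont : ContinuousAt (fun ε : ℝ => K * ε ^ e) 0 :=
      (continuousAt_rpow_const 0 e (Or.inr (by linarith))).const_mul _
    simpa [ContinuousAt, zero_rpow (by linarith : e ≠ 0)] using
      hcont.tendsto.mono_left (nhdsWithin_le_nhds (s := Set.Ioi 0))
  obtain ⟨ε, hsmall, hε0, hε1⟩ := ((hlim.eventually_lt_const one_pos).and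
    (Ioc_mem_nhdsGT (show (0 : ℝ) < 1 / 2 by norm_num))).exists
  have hmass := hK 1 (fun _ => ⟨1, 1, ε, one_pos, one_pos, hε0, hε1⟩) Subsingleton.pairwise
  simp only [Finset.univ_unique, Finset.sum_singleton, ShellBump.lpMass, ShellBump.sobolevMass,
    ShellBump.coulombMass, one_rpow, one_mul, max_self, mul_one] at hmass
  rw [← sq, ← rpow_natCast, ← rpow_mul hε0.le, ← rpow_mul hε0.le, mul_assoc, ← rpow_add hε0,
    Nat.cast_two, ← sub_add_cancel (_ + 2 * β₂) (1 / γ), ← he, rpow_add hε0, ← mul_assoc] at hmass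
  have hε : 0 < ε ^ (1 / γ) := by positivity
  nlinarith

lemma not_radialInterpolation_of_one_div_eq (hs0 : 0 < s) (hs1 : s ≤ 1) (hγ : 0 < γ) (hp : 0 < p)
    (hq : 0 < q) (hα : 1 < α) (hαd : α < d) (hβ₁ : 0 ≤ β₁) (hβ₂ : 0 < β₂)
    (heq1 : β₁ * p + 2 * β₂ * q = 1) (heq2 : (d - s * p) * β₁ + (d + α) * β₂ = d / γ)
    (hthin : 1 / γ = (1 - s * p) * β₁ + 2 * β₂) (hqp : q * (1 - s * p) ≠ p)
    (hD : p * (d + α) - 2 * q * (d - s * p) ≠ 0) : ¬ RadialInterpolation d s γ p q α β₁ β₂ C := by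
  intro h
  obtain ⟨K, hK⟩ := h.exists_sum_lpMass_rpow_le hs0 hs1 hγ hp hq hα hαd.le hβ₁ hβ₂.le
  have hlt : β₁ + β₂ < 1 / γ := by
    have hgap : ((d : ℝ) - 1) * (1 / γ - (β₁ + β₂)) = (α - 1) * β₂ := by
      rw [div_eq_mul_one_div] at heq2
      linear_combination -hthin - heq2
    have := pos_of_mul_pos_right (hgap ▸ mul_pos (by linarith) hβ₂) (by linarith)
    linarith
  obtain ⟨a, b, c, hb, hc, hlp, hsob, hcoul⟩ :=
    exists_unit_mass_exponents hγ.ne' heq1 heq2 hthin hqp hD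
  obtain ⟨N, hN0, hN⟩ := ((Filter.eventually_gt_atTop 0).and
    (((tendsto_rpow_atTop (sub_pos.2 hlt)).comp tendsto_natCast_atTop_atTop).eventually_gt_atTop
      (K * 2 ^ β₂))).exists
  have hN0' : (0 : ℝ) < N := by exact_mod_cast hN0
  obtain ⟨S, hS, hlp1, hsob1, hcoul1⟩ :=
    exists_separatedRadii_unit_mass hαd hb hc hlp hsob hcoul N
  have hmass := hK N S hS
  simp only [hlp1, hsob1, Finset.sum_const, Finset.card_univ, Fintype.card_fin, nsmul_eq_mul,
    mul_one] at hmass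
  refine hN.not_ge ?_
  rw [Function.comp_apply, rpow_sub hN0', rpow_add hN0', div_le_iff₀ (by positivity)]
  calc (N : ℝ) ^ (1 / γ) ≤ K * N ^ β₁ * (2 * N) ^ β₂ := by
        refine hmass.trans ?_
        gcongr
        exact Finset.sum_nonneg fun i _ => Finset.sum_nonneg fun j _ =>
          ShellBump.coulombMass_nonneg ..
    _ = K * 2 ^ β₂ * (N ^ β₁ * N ^ β₂) := by
        rw [mul_rpow two_pos.le hN0'.le]
        ring

theorem stmt3_general (hs0 : 0 < s) (hs1 : s ≤ 1) (hγ : 0 < γ) (hp : 0 < p) (hq : 0 < q)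
    (hα : 1 < α) (hαd : α < d) (hβ₁ : 0 ≤ β₁) (hβ₂ : 0 < β₂)
    (heq1 : β₁ * p + 2 * β₂ * q = 1) (heq2 : (d - s * p) * β₁ + (d + α) * β₂ = d / γ)
    (hcon : β₁ * γ + (d + α - 2) / (d - 1) * (β₂ * γ) < 1 ∨
      β₁ * γ + (d + α - 2) / (d - 1) * (β₂ * γ) = 1 ∧ q * (1 - s * p) ≠ p ∧
        p * (d + α) - 2 * q * (d - s * p) ≠ 0) :
    ¬ RadialInterpolation d s γ p q α β₁ β₂ C := by
  have hd : (0 : ℝ) < d - 1 := by linarith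
  have hscale : β₁ * γ + ((d : ℝ) + α - 2) / (d - 1) * (β₂ * γ) =
      1 + γ / (d - 1) * (1 / γ - ((1 - s * p) * β₁ + 2 * β₂)) := by
    field_simp at heq2 ⊢
    linear_combination heq2
  have hpos : 0 < γ / ((d : ℝ) - 1) := by positivity
  rw [hscale, add_lt_iff_neg_left, add_eq_left,
    mul_eq_zero_iff_left hpos.ne', sub_eq_zero] at hcon
  rcases hcon with hlt | ⟨heq, hqp, hD⟩
  · exact not_radialInterpolation_of_one_div_lt hs0 hs1 hγ hp hq hα hαd.le hβ₁ hβ₂.le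
      (sub_neg.1 (neg_of_mul_neg_right hlt hpos.le))
  · exact not_radialInterpolation_of_one_div_eq hs0 hs1 hγ hp hq hα hαd hβ₁ hβ₂ heq1 heq2 heq hqp
      hD

end Failure

theorem stmt3 (d : ℕ) (hd : 2 ≤ d) (s γ p q α β₁ β₂ : ℝ)
    (hs0 : 0 < s) (hs1 : s ≤ 1) (hγ1 : 1 < γ) (hp1 : 1 ≤ p) (hq1 : 1 ≤ q)
    (hα1 : 1 < α) (hαd : α < d) (hβ₁ : 0 < β₁) (hβ₂ : 0 < β₂)
    (heq1 : β₁ * p + 2 * β₂ * q = 1)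
    (heq2 : ((d : ℝ) - s * p) * β₁ + ((d : ℝ) + α) * β₂ = d / γ)
    (hD : p * ((d : ℝ) + α) - 2 * q * ((d : ℝ) - s * p) ≠ 0)
    (hcon : β₁ * γ + ((d : ℝ) + α - 2) / ((d : ℝ) - 1) * (β₂ * γ) < 1 ∨
      (β₁ * γ + ((d : ℝ) + α - 2) / ((d : ℝ) - 1) * (β₂ * γ) = 1 ∧
        q * (1 - s * p) ≠ p)) :
    ¬ ∃ C > 0, ∀ g : EuclideanSpace ℝ (Fin d) → ℝ,
      (∀ x y : EuclideanSpace ℝ (Fin d), ‖x‖ = ‖y‖ → g x = g y) →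
      ContDiff ℝ 1 g → HasCompactSupport g →
      (∫ x, |g x| ^ γ) ^ (1 / γ) ≤
        C * sobolevSemi d s p g ^ (β₁ * p) * coulombEnergy d q α g ^ β₂ :=
  fun ⟨_, _, h⟩ => stmt3_general hs0 hs1 (by linarith) (by linarith) (by linarith) hα1 hαd hβ₁.le
    hβ₂ heq1 heq2 (hcon.imp_right fun ⟨heq, hqp⟩ => ⟨heq, hqp, hD⟩) fun g hrad _ hg =>
      h g hrad (hg.of_le (by simp))
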